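/- arXiv:math/0504083 — 11 statements merged into one kernel-verified Lean document; each statement's English description precedes it below -/
import Mathlib

section
/- Let R be a finite ring with q elements in which 2 is a unit. Then for every c ∈ R there exists a bijection N : R → {0,1,…,q−1} such that N(a) + N(−a + c) = q − 1 for all a ∈ R. -/
/-!
The condition on `N` says that `N` conjugates the involution `a ↦ -a + c` of `R` into the reversal
`i ↦ q - 1 - i` of `{0, …, q - 1}`. Since `2` is a unit, `a ↦ -a + c` has exactly one fixed point,
namely `2⁻¹ * c`; pairing off the other elements shows that `q` is odd, so the reversal has exactly
one fixed point as well, namely `(q - 1) / 2`. Two involutions of a finite set with a single fixed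
point each have the same cycle type, hence are conjugate
(`isConj_of_involutive_of_unique_fixed`), and a conjugating permutation provides `N`.
-/

theorem card_support_add_one_of_unique_fixed {α : Type*} [Fintype α] [DecidableEq α]
    (σ : Equiv.Perm α) (x : α) (hx : ∀ y, σ y = y ↔ y = x) :
    σ.support.card + 1 = Fintype.card α := by
  have h : σ.support = Finset.univ.erase x := by
    ext y
    simp [hx]
  rw [h, Finset.card_erase_add_one (Finset.mem_univ x), Finset.card_univ]

theorem cycleType_of_sq_eq_one {α : Type*} [Fintype α] [DecidableEq α]
    (σ : Equiv.Perm α) (h : σ ^ 2 = 1) :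
    σ.cycleType = Multiset.replicate (Multiset.card σ.cycleType) 2 :=
  Multiset.eq_replicate_card.2 (Equiv.Perm.pow_prime_eq_one_iff.1 h)

theorem card_support_of_sq_eq_one {α : Type*} [Fintype α] [DecidableEq α]
    (σ : Equiv.Perm α) (h : σ ^ 2 = 1) :
    σ.support.card = 2 * Multiset.card σ.cycleType := by
  rw [← Equiv.Perm.sum_cycleType, cycleType_of_sq_eq_one σ h]
  simp [mul_comm]

/-- An involution is a product of disjoint transpositions, and the number of these is determined
by the number of fixed points. -/
theorem isConj_of_involutive_of_unique_fixed {α : Type*} [Fintype α] [DecidableEq α]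
    (σ τ : Equiv.Perm α) (hσ : σ ^ 2 = 1) (hτ : τ ^ 2 = 1) (x y : α)
    (hx : ∀ z, σ z = z ↔ z = x) (hy : ∀ z, τ z = z ↔ z = y) : IsConj σ τ := by
  have h₁ := card_support_add_one_of_unique_fixed σ x hx
  have h₂ := card_support_add_one_of_unique_fixed τ y hy
  rw [card_support_of_sq_eq_one σ hσ] at h₁
  rw [card_support_of_sq_eq_one τ hτ] at h₂
  rw [Equiv.Perm.isConj_iff_cycleType_eq, cycleType_of_sq_eq_one σ hσ,
    cycleType_of_sq_eq_one τ hτ]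
  congr 1
  omega

/-- If `R` is a finite ring with `q` elements in which `2` is a unit, then for every
`c ∈ R` there is a bijection `N : R → {0, 1, …, q−1}` of type `c`, i.e. satisfying
`N a + N (−a + c) = q − 1` for all `a ∈ R`. -/
theorem exists_bijection_of_type_of_two_unit
    (R : Type*) [Ring R] [Fintype R] (h2 : IsUnit (2 : R)) (c : R) :
    ∃ N : R ≃ Fin (Fintype.card R),
      ∀ a : R, ((N a : ℕ) + (N (-a + c) : ℕ)) = Fintype.card R - 1 := by
  classical
  obtain ⟨u, hu⟩ := h2
  let e := Fintype.equivFin R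
  have hinv : Function.Involutive (fun a : R => -a + c) := fun a => by simp
  -- the involution `a ↦ -a + c`, transported to `Fin q` along an arbitrary enumeration of `R`
  let σ : Equiv.Perm (Fin (Fintype.card R)) := e.permCongr hinv.toPerm
  have hσe : ∀ a, σ (e a) = e (-a + c) := fun a => by simp [σ]
  have hσ : σ ^ 2 = 1 := by
    ext i
    obtain ⟨a, rfl⟩ := e.surjective i
    simp [sq, hσe]
  have hx : ∀ z, σ z = z ↔ z = e (↑u⁻¹ * c) := by
    intro z
    obtain ⟨a, rfl⟩ := e.surjective z
    rw [hσe, e.injective.eq_iff, e.injective.eq_iff, Units.eq_inv_mul_iff_mul_eq, hu, two_mul,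
      neg_add_eq_iff_eq_add, eq_comm]
  have hτ : (Fin.revPerm : Equiv.Perm (Fin (Fintype.card R))) ^ 2 = 1 := by
    ext i
    simp [sq]
  have hodd := card_support_add_one_of_unique_fixed σ _ hx
  rw [card_support_of_sq_eq_one σ hσ, Fintype.card_fin] at hodd
  have hy : ∀ z : Fin (Fintype.card R),
      Fin.revPerm z = z ↔ z = ⟨Multiset.card σ.cycleType, by omega⟩ := by
    intro z
    rw [Fin.revPerm_apply, Fin.ext_iff, Fin.ext_iff, Fin.val_rev]
    have := z.isLt
    simp only
    omega
  obtain ⟨π, hπ⟩ := isConj_iff.1 (isConj_of_involutive_of_unique_fixed σ _ hσ hτ _ _ hx hy)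
  refine ⟨e.trans π, fun a => ?_⟩
  have h : π (e (-a + c)) = Fin.rev (π (e a)) := by
    rw [← Fin.revPerm_apply, ← hπ]
    simp [hσe]
  have := (π (e a)).isLt
  rw [Equiv.trans_apply, Equiv.trans_apply, h, Fin.val_rev]
  omega
end

section
/- Let R be a finite ring with q elements in which 2 is not a unit. Then for every unit c ∈ R there exists a bijection N : R → {0,1,…,q−1} such that N(a) + N(−a + c) = q − 1 for all a ∈ R. -/
/-!
The map `σ : a ↦ -a + c` is an involution of `R`. A fixed point `a` would satisfy `2 * a = c`, so
`2` would be a unit; hence `σ` has no fixed point. A fixed-point-free involution of a set with `q`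
elements is a product of disjoint transpositions covering the set
(`cycleType_eq_of_involutive`), so `q` is even and, `q` being even, the reflection
`i ↦ q - 1 - i` of `{0, …, q - 1}` has no fixed point either. The two permutations therefore have
the same cycle type, and a conjugation from the first to the second is the required numbering.
-/

/-- A fixed-point-free involution is a product of disjoint transpositions that move every point. -/
lemma cycleType_eq_of_involutive {α : Type*} [Fintype α] [DecidableEq α] (σ : Equiv.Perm α)
    (hσ : ∀ a, σ (σ a) = a) (hfix : ∀ a, σ a ≠ a) :
    ∃ k, σ.cycleType = Multiset.replicate k 2 ∧ k * 2 = Fintype.card α := by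
  have hpow : σ ^ 2 = 1 := by
    ext a
    simp [pow_two, hσ]
  have hmem : ∀ m ∈ σ.cycleType, m = 2 := fun m hm =>
    le_antisymm
      (Nat.le_of_dvd two_pos
        ((Equiv.Perm.dvd_of_mem_cycleType hm).trans (orderOf_dvd_of_pow_eq_one hpow)))
      (Equiv.Perm.two_le_of_mem_cycleType hm)
  have hrep := Multiset.eq_replicate_of_mem hmem
  have hsupp : σ.support = Finset.univ := by
    ext a
    simp [hfix a]
  refine ⟨_, hrep, ?_⟩
  have hsum := σ.sum_cycleType
  rw [hrep, hsupp, Multiset.sum_replicate, smul_eq_mul, Finset.card_univ] at hsum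
  exact hsum

/-- The orbits of a fixed-point-free involution can be numbered symmetrically about the middle of
`{0, …, n - 1}`. -/
lemma exists_equiv_add_eq_of_involutive {α : Type*} [Fintype α] (σ : Equiv.Perm α)
    (hσ : ∀ a, σ (σ a) = a) (hfix : ∀ a, σ a ≠ a) :
    ∃ N : α ≃ Fin (Fintype.card α),
      ∀ a, (N a : ℕ) + (N (σ a) : ℕ) = Fintype.card α - 1 := by
  let e := Fintype.equivFin α
  obtain ⟨k, hk, hcard⟩ := cycleType_eq_of_involutive (e.permCongr σ)
    (fun i => by simp [Equiv.permCongr_apply, hσ])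
    (fun i h => hfix (e.symm i) (by
      rw [Equiv.permCongr_apply] at h
      exact e.injective (by simpa using h)))
  obtain ⟨l, hl, hcard'⟩ := cycleType_eq_of_involutive
    (Fin.revPerm : Equiv.Perm (Fin (Fintype.card α)))
    (fun i => by simp)
    (fun i h => by
      have h1 := congrArg Fin.val h
      rw [Fin.revPerm_apply, Fin.val_rev] at h1
      rw [Fintype.card_fin] at hcard
      omega)
  obtain rfl : k = l := by omega
  obtain ⟨g, hg⟩ := isConj_iff.1 (Equiv.Perm.isConj_iff_cycleType_eq.2 (hk.trans hl.symm))
  refine ⟨e.trans g, fun a => ?_⟩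
  have h : g (e (σ a)) = (g (e a)).rev := by
    have := congrArg (fun p => p (g (e a))) hg
    simpa [Equiv.permCongr_apply] using this
  have hlt := (g (e a)).isLt
  rw [Equiv.trans_apply, Equiv.trans_apply, h, Fin.val_rev]
  omega

/-- If `R` is a finite ring with `q` elements in which `2` is not a unit, then for every
unit `c ∈ R` there is a bijection `N : R → {0, 1, …, q−1}` of type `c`, i.e. satisfying
`N a + N (−a + c) = q − 1` for all `a ∈ R`. -/
theorem exists_bijection_of_type_of_two_not_unit
    (R : Type*) [Ring R] [Fintype R] (h2 : ¬ IsUnit (2 : R)) (c : R) (hc : IsUnit c) :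
    ∃ N : R ≃ Fin (Fintype.card R),
      ∀ a : R, ((N a : ℕ) + (N (-a + c) : ℕ)) = Fintype.card R - 1 := by
  refine exists_equiv_add_eq_of_involutive ((Equiv.neg R).trans (Equiv.addRight c))
    (fun a => by simp) (fun a h => h2 ?_)
  have h' : -a + c = a := h
  have hca : 2 * a = c := by
    rw [two_mul]
    nth_rewrite 1 [← h']
    abel
  -- `2` is central, so it is a unit as a factor of the unit `c`.
  exact ((Commute.ofNat_left 2 a).isUnit_mul_iff.1 (hca ▸ hc)).1
end

section
/- Let R be a finite commutative ring with q elements and n ≥ 1. For j = 1,…,n let N_{(j)} : R → {0,…,q−1} be a bijection of type c_j ∈ R, with induced bijection N_n : R^n → {1,…,q^n}; for j = 1,…,2n let N'_{(j)} : R → {0,…,q−1} be a bijection of type c'_j ∈ R, with induced bijection N'_{2n} : R^{2n} → {1,…,q^{2n}}. Let X = (A B) ∈ GL_{2n}(R) be an n-multimagic generator matrix and let t ∈ R^{2n}. Then the q^n × q^n matrix M defined by M_{N_n(a), N_n(b)} = N'_{2n}(X·(a,b) + t) for a, b ∈ R^n (where (a,b) ∈ R^{2n} is the concatenation of a and b)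 is a normal n-multimagic square. -/
/-!
Write `X (a, b) = A a + B b`. Normality holds because `X` is invertible and base-`q` digit
expansions are unique.

For the magic sums, every row, column and diagonal of `M` is the family of values
`N'_{2n}(C a + s)`, `a ∈ R^n`, for a fixed vector `s` and `C` one of `B`, `A`, `A + B`, `A - B`;
for the antidiagonal this uses that reversing the index `N_n(a)` means replacing `a` by `-a + c`,
since complementing every base-`q` digit of a number `k < q^n` gives `q^n - 1 - k`.
It remains to see that `∑ₐ N'_{2n}(C a + s)^d` does not depend on `C` and `s` when `d ≤ n` and
the `n × n` minors of `C` are units (`sum_pow_affine_eq`).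
Expanding the `d`-th power of the digit sum, each term involves at most `d ≤ n` coordinates of
`C a + s`, and any `n` coordinates of `C a + s` run over all of `R^n` exactly once
(`bijective_affine`), so each term has a sum independent of `C` and `s`.
-/

/-- An `m × m` matrix of natural numbers is a magic square if all row sums,
all column sums, the main diagonal sum and the antidiagonal sum are equal. -/
def IsMagicSquare {m : ℕ} (M : Fin m → Fin m → ℕ) : Prop :=
  ∃ S : ℕ,
    (∀ i, (∑ j, M i j) = S) ∧
    (∀ j, (∑ i, M i j) = S) ∧
    (∑ i, M i i) = S ∧
    (∑ i, M i i.rev) = S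

/-- `M` is `n`-multimagic if the entrywise `d`-th power of `M` is magic for `d = 1, …, n`. -/
def IsMultimagic {m : ℕ} (n : ℕ) (M : Fin m → Fin m → ℕ) : Prop :=
  ∀ d, 1 ≤ d → d ≤ n → IsMagicSquare (fun i j => M i j ^ d)

/-- `M` is normal if its entries are exactly `1, 2, …, m²`, each occurring once. -/
def IsNormal {m : ℕ} (M : Fin m → Fin m → ℕ) : Prop :=
  Function.Injective (fun p : Fin m × Fin m => M p.1 p.2) ∧
  Set.range (fun p : Fin m × Fin m => M p.1 p.2) = Set.Icc 1 (m ^ 2)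

/-- All `n × n` minors (choices of `n` rows) of an `m × n` matrix are units. -/
def MinorsUnit {R : Type*} [CommRing R] {m n : ℕ} (A : Matrix (Fin m) (Fin n) R) : Prop :=
  ∀ r : Fin n → Fin m, StrictMono r → IsUnit (A.submatrix r id).det

/-- The `(2n) × (2n)` matrix `(A B)` obtained by placing `A` and `B` side by side. -/
def fromCols {R : Type*} {n : ℕ} (A B : Matrix (Fin (2 * n)) (Fin n) R) :
    Matrix (Fin (2 * n)) (Fin (2 * n)) R :=
  fun i j =>
    if h : (j : ℕ) < n then A i ⟨j, h⟩
    else B i ⟨(j : ℕ) - n, by have := j.isLt; omega⟩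

/-- The concatenation of two vectors of length `n` into a vector of length `2n`. -/
def concat {R : Type*} {n : ℕ} (a b : Fin n → R) : Fin (2 * n) → R :=
  fun j =>
    if h : (j : ℕ) < n then a ⟨j, h⟩
    else b ⟨(j : ℕ) - n, by have := j.isLt; omega⟩

lemma bijective_affine {R : Type*} [CommRing R] {k : ℕ}
    (C : Matrix (Fin k) (Fin k) R) (hC : IsUnit C.det) (s : Fin k → R) :
    Function.Bijective (fun a : Fin k → R => C.mulVec a + s) := by
  have h : Function.Bijective C.mulVec := by
    constructor
    · exact Matrix.mulVec_injective_of_isUnit ((Matrix.isUnit_iff_isUnit_det C).2 hC)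
    · intro v
      refine ⟨C⁻¹.mulVec v, ?_⟩
      rw [Matrix.mulVec_mulVec, Matrix.mul_nonsing_inv C hC, Matrix.one_mulVec]
  exact (Equiv.addRight s).bijective.comp h

/-- The sum of the `d`-th powers of a sum of one-coordinate functions over the affine image of
`R^n` is the same for all matrices with unit `n × n` minors and all translations. -/
lemma sum_pow_affine_eq {R : Type*} [CommRing R] [Fintype R] {n m d : ℕ} (hd : d ≤ n)
    (hm : n ≤ m) (G : Fin m → R → ℕ) (C C' : Matrix (Fin m) (Fin n) R)
    (hC : MinorsUnit C) (hC' : MinorsUnit C') (s s' : Fin m → R) :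
    ∑ a : Fin n → R, (∑ j, G j ((C.mulVec a + s) j)) ^ d
      = ∑ a : Fin n → R, (∑ j, G j ((C'.mulVec a + s') j)) ^ d := by
  classical
  simp only [Fintype.sum_pow]
  rw [Finset.sum_comm, Finset.sum_comm (s := Finset.univ (α := Fin n → R))]
  refine Finset.sum_congr rfl fun p _ => ?_
  -- The coordinates occurring in the term `p` lie among `n` rows, listed increasingly by `r`.
  obtain ⟨T, hT, hTc⟩ := Finset.exists_superset_card_eq (s := Finset.univ.image p) (n := n)
    (by simpa using Finset.card_image_le.trans (by simpa using hd)) (by simpa using hm)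
  set r := T.orderEmbOfFin hTc with hr
  have he : ∀ i, ∃ k, r k = p i := fun i => by
    have : p i ∈ Set.range r := by
      rw [hr, Finset.range_orderEmbOfFin]
      exact hT (Finset.mem_image_of_mem _ (Finset.mem_univ i))
    exact this
  choose e he using he
  have key : ∀ (D : Matrix (Fin m) (Fin n) R) (u : Fin m → R), MinorsUnit D →
      ∑ a : Fin n → R, ∏ i, G (p i) ((D.mulVec a + u) (p i))
        = ∑ v : Fin n → R, ∏ i, G (p i) (v (e i)) := by
    intro D u hD
    refine Fintype.sum_bijective _
      (bijective_affine (D.submatrix r id) (hD r r.strictMono) (u ∘ r)) _ _ fun a => ?_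
    refine Finset.prod_congr rfl fun i _ => ?_
    simp only [← he]
    rfl
  rw [key C s hC, key C' s' hC']

lemma sum_fin_two_mul {α : Type*} [AddCommMonoid α] {n : ℕ} (f : Fin (2 * n) → α) :
    ∑ j, f j = ∑ j : Fin n, f ⟨j, by omega⟩ + ∑ j : Fin n, f ⟨n + j, by omega⟩ := by
  rw [← Equiv.sum_comp (finCongr (two_mul n).symm) f, Fin.sum_univ_add]
  rfl

lemma fromCols_mulVec_concat {R : Type*} [CommRing R] {n : ℕ}
    (A B : Matrix (Fin (2 * n)) (Fin n) R) (a b : Fin n → R) :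
    (fromCols A B).mulVec (concat a b) = A.mulVec a + B.mulVec b := by
  ext i
  simp [Matrix.mulVec, dotProduct, sum_fin_two_mul, fromCols, concat]

lemma concat_bijective {R : Type*} {n : ℕ} :
    Function.Bijective (fun p : (Fin n → R) × (Fin n → R) => concat p.1 p.2) := by
  constructor
  · rintro ⟨a, b⟩ ⟨a', b'⟩ h
    refine Prod.ext (funext fun j => ?_) (funext fun j => ?_)
    · simpa [concat] using congrFun h ⟨j, by omega⟩
    · simpa [concat] using congrFun h ⟨n + j, by omega⟩
  · intro v
    refine ⟨(fun j => v ⟨j, by omega⟩, fun j => v ⟨n + j, by omega⟩), funext fun j => ?_⟩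
    simp only [concat]
    split_ifs with h
    · rfl
    · congr 1
      ext
      simp only
      omega

/-- Uniqueness and existence of base-`q` expansions, with digits relabelled by `R`. -/
lemma digits_equiv {R : Type*} {q m : ℕ} (N : Fin m → R ≃ Fin q) :
    ∃ E : (Fin m → R) ≃ Fin (q ^ m), ∀ x, (E x : ℕ) = ∑ j : Fin m, q ^ (j : ℕ) * (N j (x j) : ℕ) := by
  refine ⟨(Equiv.piCongrRight N).trans finFunctionFinEquiv, fun x => ?_⟩
  simp [mul_comm]


/-- Let `R` be a finite commutative ring with `q` elements, `n ≥ 1`, let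
`N_(1), …, N_(n) : R ≃ {0, …, q−1}` be bijections of types `c_1, …, c_n`, inducing the
bijection `N_n : R^n ≃ {1, …, q^n}`, and let `N'_(1), …, N'_(2n)` be bijections of types
`c'_1, …, c'_{2n}`, inducing `N'_{2n} : R^{2n} ≃ {1, …, q^{2n}}`.  If `X = (A B)` is an
`n`-multimagic generator matrix (it is invertible and all `n × n` minors of
`A`, `B`, `A + B`, `A − B` are units), then for every `t ∈ R^{2n}` the `q^n × q^n` matrix
`M` with `M_{N_n(a), N_n(b)} = N'_{2n}(X·(a,b) + t)` is a normal `n`-multimagic square.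
(Here the bijection `N_n` is encoded by an equivalence `Nn : R^n ≃ Fin (q^n)` whose
`0`-based value satisfies `(Nn a : ℕ) = Σ_j q^(j−1) N_(j)(a_j)`, so that the matrix entry
indexed `(N_n(a), N_n(b))` is `M (Nn a) (Nn b)`; the value of `N'_{2n}` is written out.) -/
theorem multimagic_square_of_generator_matrix
    (R : Type*) [CommRing R] [Fintype R] (q n : ℕ) (hq : Fintype.card R = q) (hn : 1 ≤ n)
    (c : Fin n → R) (N : Fin n → R ≃ Fin q)
    (hN : ∀ (j : Fin n) (a : R), ((N j a : ℕ) + (N j (-a + c j) : ℕ)) = q - 1)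
    (c' : Fin (2 * n) → R) (N' : Fin (2 * n) → R ≃ Fin q)
    (hN' : ∀ (j : Fin (2 * n)) (a : R), ((N' j a : ℕ) + (N' j (-a + c' j) : ℕ)) = q - 1)
    (Nn : (Fin n → R) ≃ Fin (q ^ n))
    (hNn : ∀ a : Fin n → R, (Nn a : ℕ) = ∑ j : Fin n, q ^ (j : ℕ) * (N j (a j) : ℕ))
    (A B : Matrix (Fin (2 * n)) (Fin n) R)
    (hX : IsUnit (fromCols A B).det)
    (hA : MinorsUnit A) (hB : MinorsUnit B)
    (hAB : MinorsUnit (A + B)) (hAB' : MinorsUnit (A - B))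
    (t : Fin (2 * n) → R)
    (M : Fin (q ^ n) → Fin (q ^ n) → ℕ)
    (hM : ∀ a b : Fin n → R,
      M (Nn a) (Nn b)
        = 1 + ∑ j : Fin (2 * n),
            q ^ (j : ℕ) * ((N' j) (((fromCols A B).mulVec (concat a b) + t) j) : ℕ)) :
    IsNormal M ∧ IsMultimagic n M := by
  have hq0 : 0 < q := hq ▸ Fintype.card_pos
  obtain ⟨E, hE⟩ := digits_equiv N'
  have hM' : ∀ a b, M (Nn a) (Nn b) = 1 + (E ((fromCols A B).mulVec (concat a b) + t) : ℕ) := by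
    intro a b
    rw [hM, hE]
  have hsq : (q ^ n) ^ 2 = q ^ (2 * n) := by rw [← pow_mul, mul_comm]
  have hΦ := (bijective_affine (fromCols A B) hX t).comp (concat_bijective (R := R) (n := n))
  refine ⟨⟨?_, ?_⟩, ?_⟩
  · rintro ⟨i, j⟩ ⟨i', j'⟩ h
    obtain ⟨a, rfl⟩ := Nn.surjective i
    obtain ⟨b, rfl⟩ := Nn.surjective j
    obtain ⟨a', rfl⟩ := Nn.surjective i'
    obtain ⟨b', rfl⟩ := Nn.surjective j'
    simp only [hM', Nat.add_left_cancel_iff] at h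
    have h2 := @hΦ.1 (a, b) (a', b') (E.injective (Fin.ext h))
    simp only [Prod.mk.injEq] at h2
    rw [h2.1, h2.2]
  · ext k
    simp only [Set.mem_range, Set.mem_Icc, hsq]
    constructor
    · rintro ⟨⟨i, j⟩, rfl⟩
      obtain ⟨a, rfl⟩ := Nn.surjective i
      obtain ⟨b, rfl⟩ := Nn.surjective j
      simp only [hM']
      have := (E ((fromCols A B).mulVec (concat a b) + t)).isLt
      omega
    · rintro ⟨h1, h2⟩
      obtain ⟨⟨a, b⟩, hab⟩ := hΦ.2 (E.symm ⟨k - 1, by omega⟩)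
      refine ⟨(Nn a, Nn b), ?_⟩
      simp only [Function.comp] at hab
      simp only [hM', hab, Equiv.apply_symm_apply]
      omega
  · intro d _ hd
    -- The offset `1` is absorbed into the function of the coordinate `0`.
    set G : Fin (2 * n) → R → ℕ := fun j x =>
      (if j = ⟨0, by omega⟩ then 1 else 0) + q ^ (j : ℕ) * (N' j x : ℕ) with hG
    have hMG : ∀ a b, M (Nn a) (Nn b) = ∑ j, G j ((A.mulVec a + B.mulVec b + t) j) := by
      intro a b
      rw [hM, fromCols_mulVec_concat]
      simp [hG, Finset.sum_add_distrib]
    have hrev : ∀ a, (Nn a).rev = Nn (-a + c) := by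
      intro a
      have hdig : ∑ j : Fin n, q ^ (j : ℕ) * (q - 1) = q ^ n - 1 := by
        rw [← Finset.sum_mul, Fin.sum_univ_eq_sum_range (fun j => q ^ j) n]
        exact geom_sum_mul_of_one_le hq0 n
      have hsum : (Nn a : ℕ) + (Nn (-a + c) : ℕ) = q ^ n - 1 := by
        rw [hNn, hNn, ← Finset.sum_add_distrib, ← hdig]
        refine Finset.sum_congr rfl fun j _ => ?_
        rw [← mul_add, ← hN j (a j)]
        rfl
      ext
      rw [Fin.val_rev]
      omega
    have key := fun C hC s => sum_pow_affine_eq hd (by omega) G C A hC hA s t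
    refine ⟨∑ a, (∑ j, G j ((A.mulVec a + t) j)) ^ d, fun i => ?_, fun j => ?_, ?_, ?_⟩
    · obtain ⟨a, rfl⟩ := Nn.surjective i
      rw [← Equiv.sum_comp Nn, ← key B hB (A.mulVec a + t)]
      refine Finset.sum_congr rfl fun b _ => ?_
      beta_reduce
      rw [hMG, add_left_comm, add_assoc]
    · obtain ⟨b, rfl⟩ := Nn.surjective j
      rw [← Equiv.sum_comp Nn, ← key A hA (B.mulVec b + t)]
      refine Finset.sum_congr rfl fun a _ => ?_
      beta_reduce
      rw [hMG, add_assoc]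
    · rw [← Equiv.sum_comp Nn, ← key (A + B) hAB t]
      refine Finset.sum_congr rfl fun a _ => ?_
      beta_reduce
      rw [hMG, Matrix.add_mulVec]
    · rw [← Equiv.sum_comp Nn, ← key (A - B) hAB' (B.mulVec c + t)]
      refine Finset.sum_congr rfl fun a _ => ?_
      have : A.mulVec a + B.mulVec (-a + c) + t = (A - B).mulVec a + (B.mulVec c + t) := by
        rw [Matrix.sub_mulVec, Matrix.mulVec_add, Matrix.mulVec_neg]
        abel
      beta_reduce
      rw [hrev, hMG, this]
end

section
/- Let n ≥ 1 and let R be a commutative ring in which 2 and 3 are units. Let A be a 2n×n matrix over R all of whose n×n minors are units, and write A = (P; Q) with P, Q ∈ Mat_{n,n}(R) (P the top n rows, Q the bottom n rows). Set B = (2P; −2Q). Then X = (A B) ∈ GL_{2n}(R) and every n×n minor of each of A, B, A+B, A−B is a unit of R (i.e. (A B) is an n-multimagic generator matrix). -/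
/-- Given a `(2n) × n` matrix `A = (P; Q)` (with `P` the top `n` rows and `Q` the bottom
`n` rows), this is the matrix `B = (2P; −2Q)`. -/
def doubleFlip {R : Type*} [CommRing R] {n : ℕ} (A : Matrix (Fin (2 * n)) (Fin n) R) :
    Matrix (Fin (2 * n)) (Fin n) R :=
  fun i j => if (i : ℕ) < n then 2 * A i j else -2 * A i j

theorem MinorsUnit.rowScale {R : Type*} [CommRing R] {m n : ℕ} {A : Matrix (Fin m) (Fin n) R}
    (hA : MinorsUnit A) {v : Fin m → R} (hv : ∀ i, IsUnit (v i)) :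
    MinorsUnit (Matrix.of fun i j => v i * A i j) := by
  intro r hr
  have h : ((Matrix.of fun i j => v i * A i j).submatrix r id).det =
      (∏ i, v (r i)) * (A.submatrix r id).det :=
    Matrix.det_mul_column (fun i => v (r i)) (A.submatrix r id)
  rw [h]
  exact (IsUnit.prod_univ_iff.mpr fun i => hv (r i)).mul (hA r hr)

theorem isUnit_det_fromCols_doubleFlip {R : Type*} [CommRing R] {n : ℕ} (h2 : IsUnit (2 : R))
    {A : Matrix (Fin (2 * n)) (Fin n) R} (hA : MinorsUnit A) :
    IsUnit (fromCols A (doubleFlip A)).det := by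
  let e : Fin n ⊕ Fin n ≃ Fin (2 * n) := finSumFinEquiv.trans (finCongr (two_mul n).symm)
  have hl (i : Fin n) : (e (Sum.inl i) : ℕ) = i := by simp [e]
  have hr (i : Fin n) : (e (Sum.inr i) : ℕ) = n + i := by simp [e, add_comm]
  let P := A.submatrix (fun i => e (Sum.inl i)) id
  let Q := A.submatrix (fun i => e (Sum.inr i)) id
  have hP : IsUnit P.det := hA _ fun i j hij => by
    rw [Fin.lt_def, hl, hl]; exact hij
  have hQ : IsUnit Q.det := hA _ fun i j hij => by
    rw [Fin.lt_def, hr, hr]; exact Nat.add_lt_add_left hij n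
  have hX : (fromCols A (doubleFlip A)).submatrix e e =
      Matrix.fromBlocks P 0 0 Q *
        Matrix.fromBlocks 1 ((2 : R) • 1) 1 ((-2 : R) • 1) := by
    rw [Matrix.fromBlocks_multiply]
    ext (i | i) (j | j) <;>
      simp [fromCols, doubleFlip, hl, hr, P, Q]
  have hS : (1 : Matrix (Fin n) (Fin n) R) * ((2 : R) • 1) = (2 : R) • 1 := one_mul _
  rw [← Matrix.det_submatrix_equiv_self e, hX, Matrix.det_mul, Matrix.det_fromBlocks_zero₂₁,
    Matrix.det_fromBlocks_one₁₁, hS, ← sub_smul, Matrix.det_smul, Matrix.det_one, mul_one]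
  have h4 : IsUnit (-2 - 2 : R) := by
    have h : (-2 - 2 : R) = -(2 * 2) := by ring
    rw [h]
    exact (h2.mul h2).neg
  exact (hP.mul hQ).mul (h4.pow _)

/-- Let `n ≥ 1` and let `R` be a commutative ring in which `2` and `3` are units.  If `A`
is a `(2n) × n` matrix all of whose `n × n` minors are units, and `B = (2P; −2Q)` where
`A = (P; Q)`, then `(A B)` is an `n`-multimagic generator matrix: `(A B)` is invertible
and all `n × n` minors of `A`, `B`, `A + B` and `A − B` are units of `R`. -/
theorem generator_matrix_of_minors_unit
    (R : Type*) [CommRing R] (n : ℕ) (hn : 1 ≤ n)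
    (h2 : IsUnit (2 : R)) (h3 : IsUnit (3 : R))
    (A : Matrix (Fin (2 * n)) (Fin n) R) (hA : MinorsUnit A) :
    IsUnit (fromCols A (doubleFlip A)).det ∧
    MinorsUnit A ∧ MinorsUnit (doubleFlip A) ∧
    MinorsUnit (A + doubleFlip A) ∧ MinorsUnit (A - doubleFlip A) := by
  have h1 : IsUnit (-1 : R) := isUnit_one.neg
  refine ⟨isUnit_det_fromCols_doubleFlip h2 hA, hA, ?_, ?_, ?_⟩
  · convert hA.rowScale (v := fun i => if (i : ℕ) < n then 2 else -2)
      (fun i => by split_ifs <;> [exact h2; exact h2.neg]) using 1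
    ext i j
    simp only [doubleFlip, Matrix.of_apply]
    split_ifs <;> ring
  · convert hA.rowScale (v := fun i => if (i : ℕ) < n then 3 else -1)
      (fun i => by split_ifs <;> [exact h3; exact h1]) using 1
    ext i j
    simp only [doubleFlip, Matrix.add_apply, Matrix.of_apply]
    split_ifs <;> ring
  · convert hA.rowScale (v := fun i => if (i : ℕ) < n then -1 else 3)
      (fun i => by split_ifs <;> [exact h1; exact h3]) using 1
    ext i j
    simp only [doubleFlip, Matrix.sub_apply, Matrix.of_apply]
    split_ifs <;> ring
end

section
/- Let n ≥ 2 and let A be the 2n×n matrix with entries A_{i,j} = (i−1)^{j−1} for i = 1,…,2n−1 and j = 1,…,n (with the convention 0^0 = 1), and last row A_{2n,j} = 0 for j < n, A_{2n,n} = 1. If R is a commutative ring in which the images of 1, 2, …, 2n−2 are all units, then, viewing A as a matrix over R, every n×n minor of A is a unit of R. -/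
/-- The `(2n) × n` matrix with (1-based) entries `A_{i,j} = (i−1)^{j−1}` for
`i = 1, …, 2n−1` (with `0^0 = 1`) and last row `(0, …, 0, 1)`, viewed over a commutative
ring `R` via the canonical map `ℤ → R` (equivalently `ℕ → R`).  In the `0`-based indexing
used here, `A i j = i^j` for `i < 2n − 1`. -/
def vandermondeBlock (R : Type*) [CommRing R] (n : ℕ) :
    Matrix (Fin (2 * n)) (Fin n) R :=
  fun i j =>
    if (i : ℕ) < 2 * n - 1 then (((i : ℕ) ^ (j : ℕ) : ℕ) : R)
    else if (j : ℕ) = n - 1 then 1 else 0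

/-- Let `n ≥ 2` and let `R` be a commutative ring in which the images of `1, 2, …, 2n−2`
are all units.  Then all `n × n` minors of the matrix `A` of Lemma 5.2 (the Vandermonde
block with extra last row `(0, …, 0, 1)`) are units of `R`. -/
theorem vandermondeBlock_minors_unit
    (R : Type*) [CommRing R] (n : ℕ) (hn : 2 ≤ n)
    (hu : ∀ k : ℕ, 1 ≤ k → k ≤ 2 * n - 2 → IsUnit ((k : R))) :
    MinorsUnit (vandermondeBlock R n) := by
  intro r hr
  -- Homogeneous coordinates of the row with index `i`.
  let v : Fin (2 * n) → R := fun i => if (i : ℕ) < 2 * n - 1 then ((i : ℕ) : R) else 1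
  let w : Fin (2 * n) → R := fun i => if (i : ℕ) < 2 * n - 1 then 1 else 0
  have hA : (vandermondeBlock R n).submatrix r id =
      Matrix.projVandermonde (v ∘ r) (w ∘ r) := by
    ext i j
    rw [Matrix.projVandermonde_apply]
    simp only [Matrix.submatrix_apply, id, vandermondeBlock, v, w, Function.comp, Fin.val_rev]
    by_cases h : (r i : ℕ) < 2 * n - 1
    · simp [h]
    · have hj := j.isLt
      by_cases h' : (j : ℕ) = n - 1
      · simp [h, h', show n - (n - 1 + 1) = 0 by omega]
      · simp [h, h', show n - ((j : ℕ) + 1) ≠ 0 by omega]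
  rw [hA, Matrix.det_projVandermonde, IsUnit.prod_univ_iff]
  intro i
  rw [IsUnit.prod_iff]
  intro j hj
  have hlt : (r i : ℕ) < r j := hr (Finset.mem_Ioi.mp hj)
  have hi : (r i : ℕ) < 2 * n - 1 := by omega
  by_cases h : (r j : ℕ) < 2 * n - 1
  · have hk := hu ((r j : ℕ) - r i) (by omega) (by omega)
    rw [Nat.cast_sub hlt.le] at hk
    simpa [v, w, hi, h] using hk
  · simp [v, w, hi, h]
end

section
/- For every positive integer n there exists a normal n-multimagic square; more precisely, for every prime q with q ≥ 2n−1 and q ≥ 5 there exists a normal n-multimagic square of order q^n. -/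
/-- A map `u : Rⁿ → (ι → R)` is `n`-wise uniform if any `n` of its coordinates are jointly uniformly
distributed, that is, every projection to `n` distinct coordinates is a bijection of `Rⁿ`. -/
def IsUniform {ι R : Type*} {n : ℕ} (u : (Fin n → R) → ι → R) : Prop :=
  ∀ e : Fin n → ι, Function.Injective e → Function.Bijective fun y k => u y (e k)

/-- The first `n` moments of an additive function of the coordinates are the same for all `n`-wise
uniform maps. -/
lemma sum_pow_eq {ι R : Type*} [Fintype ι] [Fintype R] {n d : ℕ} (hd : d ≤ n)
    (hι : n ≤ Fintype.card ι) (h : ι → R → ℕ) {u u' : (Fin n → R) → ι → R}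
    (hu : IsUniform u) (hu' : IsUniform u') :
    ∑ y, (∑ i, h i (u y i)) ^ d = ∑ y, (∑ i, h i (u' y i)) ^ d := by
  classical
  have key : ∀ f : ι → ℕ, (∑ i, f i) ^ d = ∑ p : Fin d → ι, ∏ k, f (p k) := by
    intro f
    have := Finset.prod_univ_sum (fun _ : Fin d => (Finset.univ : Finset ι)) (fun _ i => f i)
    simpa using this
  simp only [key]
  rw [Finset.sum_comm, Finset.sum_comm (s := Finset.univ (α := Fin n → R))]
  refine Finset.sum_congr rfl fun p _ => ?_
  -- The term indexed by `p` only involves the coordinates in the range of `p`, and these are among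
  -- `n` distinct coordinates enumerated by some `e`.
  obtain ⟨t, hpt, ht⟩ := Finset.exists_superset_card_eq (s := Finset.univ.image p) (n := n)
    (Finset.card_image_le.trans (by simpa using hd)) hι
  let e : Fin n ≃ t := (Fintype.equivFinOfCardEq (by simpa using ht)).symm
  have he : Function.Injective fun k => (e k : ι) := Subtype.val_injective.comp e.injective
  have hp : ∀ k, ∃ r, (e r : ι) = p k := fun k =>
    ⟨e.symm ⟨p k, hpt (Finset.mem_image_of_mem p (Finset.mem_univ k))⟩, by simp⟩
  choose r hr using hp
  have red : ∀ v : (Fin n → R) → ι → R, IsUniform v →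
      ∑ y, ∏ k, h (p k) (v y (p k)) = ∑ z : Fin n → R, ∏ k, h (p k) (z (r k)) := by
    intro v hv
    rw [← (hv _ he).sum_comp fun z => ∏ k, h (p k) (z (r k))]
    simp only [hr]
  rw [red u hu, red u' hu']

/-- The `2 n` vectors `bᵢ ∈ (ZMod q)ⁿ`, as rows of a projective Vandermonde matrix: the nodes are
the points `(i : 1)` for `i < q`, and the point at infinity `(1 : 0)` for `i = q`, which occurs
only if `q = 2 n - 1`. -/
def codeMatrix (q n : ℕ) : Matrix (Fin (n + n)) (Fin n) (ZMod q) :=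
  Matrix.rectVandermonde (fun i : Fin (n + n) => if (i : ℕ) < q then ((i : ℕ) : ZMod q) else 1)
    (fun i : Fin (n + n) => if (i : ℕ) < q then 1 else 0) n

/-- Any `n` rows of `codeMatrix q n` are linearly independent. -/
lemma codeMatrix_eq_zero {n q : ℕ} [Fact q.Prime] (hqn : 2 * n - 1 ≤ q)
    {e : Fin n → Fin (n + n)} (he : Function.Injective e) {z : Fin n → ZMod q}
    (hz : ∀ k, codeMatrix q n (e k) ⬝ᵥ z = 0) : z = 0 := by
  let v : Fin n → ZMod q := fun k => if (e k : ℕ) < q then ((e k : ℕ) : ZMod q) else 1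
  let w : Fin n → ZMod q := fun k => if (e k : ℕ) < q then 1 else 0
  refine Matrix.eq_zero_of_mulVec_eq_zero (M := Matrix.projVandermonde v w) ?_ (funext hz)
  rw [Matrix.det_projVandermonde]
  refine Finset.prod_ne_zero_iff.2 fun i _ => Finset.prod_ne_zero_iff.2 fun j hj => ?_
  have hij : (e i : ℕ) ≠ e j := fun h => (Finset.mem_Ioi.1 hj).ne (he (Fin.ext h))
  have hi := (e i).2
  have hj := (e j).2
  by_cases h1 : (e i : ℕ) < q <;> by_cases h2 : (e j : ℕ) < q
  · simp only [v, w, h1, h2, if_true, mul_one]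
    intro h
    have h := (ZMod.natCast_eq_natCast_iff' _ _ _).1 (sub_eq_zero.1 h)
    rw [Nat.mod_eq_of_lt h1, Nat.mod_eq_of_lt h2] at h
    exact hij h.symm
  · simp [v, w, h1, h2]
  · simp [v, w, h1, h2]
  -- Both nodes would be the point at infinity, but only the index `q ≥ 2 n - 1` can give it.
  · omega

/-- Scaling the forms `⟨bᵢ, ·⟩` by nonzero constants and translating keeps any `n` of them jointly
uniform. -/
lemma isUniform_affine {n q : ℕ} [Fact q.Prime] (hqn : 2 * n - 1 ≤ q)
    {c k : Fin (n + n) → ZMod q} (hc : ∀ i, c i ≠ 0) {u : (Fin n → ZMod q) → Fin (n + n) → ZMod q}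
    (hu : ∀ y i, u y i = c i * (codeMatrix q n i ⬝ᵥ y) + k i) : IsUniform u := by
  intro e he
  refine Finite.injective_iff_bijective.1 fun y y' h => ?_
  refine sub_eq_zero.1 (codeMatrix_eq_zero hqn he fun j => ?_)
  have hj := congrFun h j
  simp only [hu, add_left_inj] at hj
  rw [dotProduct_sub, mul_left_cancel₀ (hc _) hj, sub_self]

/-- Reversal of numbers below `q ^ n` is digitwise reversal in base `q`. -/
lemma finFunctionFinEquiv_rev {q n : ℕ} (f : Fin n → Fin q) :
    (finFunctionFinEquiv f).rev = finFunctionFinEquiv fun i => (f i).rev := by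
  have h : ∑ i : Fin n, ((f i).rev : ℕ) * q ^ (i : ℕ) + ∑ i : Fin n, (f i : ℕ) * q ^ (i : ℕ) + 1
      = q ^ n := by
    rw [← Finset.sum_add_distrib]
    have h1 : ∀ i : Fin n, ((f i).rev : ℕ) * q ^ (i : ℕ) + (f i : ℕ) * q ^ (i : ℕ)
        = (q - 1) * q ^ (i : ℕ) := by
      intro i
      rw [← add_mul, Fin.val_rev]
      congr 1
      have := (f i).2
      omega
    simp only [h1]
    rw [← Finset.mul_sum, Fin.sum_univ_eq_sum_range (fun i => q ^ i)]
    rcases q with _ | q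
    · rcases n with _ | n
      · simp
      · exact (f 0).elim0
    · rw [Nat.add_sub_cancel, mul_comm, geom_sum_mul_add]
  apply Fin.ext
  rw [Fin.val_rev, finFunctionFinEquiv_apply, finFunctionFinEquiv_apply]
  omega

lemma finEquiv_rev {q : ℕ} [NeZero q] (a : Fin q) :
    ZMod.finEquiv q a.rev = -1 - ZMod.finEquiv q a := by
  rcases q with _ | q
  · exact a.elim0
  · have h : Fin.last q = -1 := Fin.ext (by simp)
    change a.rev = -1 - a
    rw [← h, Fin.last_sub]

/-- The identification of indices below `q ^ n` with digit vectors in `(ZMod q)ⁿ`. -/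
def digits (q n : ℕ) [NeZero q] : Fin (q ^ n) ≃ (Fin n → ZMod q) :=
  finFunctionFinEquiv.symm.trans (Equiv.piCongrRight fun _ => (ZMod.finEquiv q).toEquiv)

lemma digits_rev {q n : ℕ} [NeZero q] (a : Fin (q ^ n)) (i : Fin n) :
    digits q n a.rev i = -1 - digits q n a i := by
  obtain ⟨f, rfl⟩ := finFunctionFinEquiv.surjective a
  rw [finFunctionFinEquiv_rev]
  simp [digits, finEquiv_rev]

lemma digits_symm_val {q n : ℕ} [NeZero q] (z : Fin n → ZMod q) :
    ((digits q n).symm z : ℕ) = ∑ i, ((ZMod.finEquiv q).symm (z i) : ℕ) * q ^ (i : ℕ) := rfl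

/-- The multipliers `dᵢ`: `2` on the first `n` indices and `-2` on the last `n`. -/
def mult (q n : ℕ) (i : Fin (n + n)) : ZMod q := if (i : ℕ) < n then 2 else -2

/-- The digit vector of the entry at position `(x, y)`. -/
def entryDigits (q n : ℕ) (x y : Fin n → ZMod q) (i : Fin (n + n)) : ZMod q :=
  mult q n i * (codeMatrix q n i ⬝ᵥ x) + codeMatrix q n i ⬝ᵥ y

lemma zmod_ne_zero {q : ℕ} (hq5 : 5 ≤ q) {a : ℕ} (ha : 1 ≤ a) (ha4 : a < 5) :
    (a : ZMod q) ≠ 0 := by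
  rw [Ne, ZMod.natCast_eq_zero_iff]
  exact fun h => absurd (Nat.le_of_dvd ha h) (by omega)

lemma mult_ne {q n : ℕ} (hq5 : 5 ≤ q) (i : Fin (n + n)) :
    mult q n i ≠ 0 ∧ mult q n i + 1 ≠ 0 ∧ mult q n i - 1 ≠ 0 := by
  have h1 := zmod_ne_zero hq5 (a := 1) (by norm_num) (by norm_num)
  have h2 := zmod_ne_zero hq5 (a := 2) (by norm_num) (by norm_num)
  have h3 := zmod_ne_zero hq5 (a := 3) (by norm_num) (by norm_num)
  push_cast at h1 h2 h3
  unfold mult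
  split_ifs
  · exact ⟨h2, fun h => h3 (by linear_combination h), fun h => h1 (by linear_combination h)⟩
  · exact ⟨fun h => h2 (by linear_combination -h), fun h => h1 (by linear_combination -h),
      fun h => h3 (by linear_combination -h)⟩

/-- The first `n` digits determine `2 x + y` and the last `n` determine `-2 x + y`. -/
lemma entryDigits_injective {n q : ℕ} [Fact q.Prime] (hqn : 2 * n - 1 ≤ q) (hq5 : 5 ≤ q) :
    Function.Injective fun p : (Fin n → ZMod q) × (Fin n → ZMod q) =>
      entryDigits q n p.1 p.2 := by
  rintro ⟨x, y⟩ ⟨x', y'⟩ h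
  have h1 : (2 : ZMod q) • (x - x') + (y - y') = 0 := by
    refine codeMatrix_eq_zero hqn (Fin.castAdd_injective n n) fun k => ?_
    have hk := congrFun h (Fin.castAdd n k)
    simp only [entryDigits, mult, Fin.val_castAdd, Fin.is_lt, if_true] at hk
    simp only [dotProduct_add, dotProduct_sub, dotProduct_smul, smul_eq_mul]
    linear_combination hk
  have h2 : (-2 : ZMod q) • (x - x') + (y - y') = 0 := by
    refine codeMatrix_eq_zero hqn (Fin.natAdd_injective n n) fun k => ?_
    have hk := congrFun h (Fin.natAdd n k)
    simp only [entryDigits, mult, Fin.val_natAdd, Nat.not_lt.2 (Nat.le_add_right _ _),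
      if_false] at hk
    simp only [dotProduct_add, dotProduct_sub, dotProduct_smul, smul_eq_mul]
    linear_combination hk
  have h4 := zmod_ne_zero hq5 (a := 4) (by norm_num) (by norm_num)
  push_cast at h4
  have hx : x = x' := by
    funext i
    have a := congrFun h1 i
    have b := congrFun h2 i
    simp only [Pi.add_apply, Pi.smul_apply, Pi.sub_apply, Pi.zero_apply, smul_eq_mul] at a b
    exact sub_eq_zero.1 ((mul_eq_zero.1 (by linear_combination a - b :
      (4 : ZMod q) * (x i - x' i) = 0)).resolve_left h4)
  subst hx
  simpa [sub_eq_zero] using h1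

/-- For every positive integer `n` there exists a normal `n`-multimagic square; more
precisely, for every prime `q` with `q ≥ 2n − 1` and `q ≥ 5` there exists a normal
`n`-multimagic square of order `q^n`. -/
theorem exists_normal_multimagic_square
    (n q : ℕ) (hn : 1 ≤ n) (hq : q.Prime) (hqn : 2 * n - 1 ≤ q) (hq5 : 5 ≤ q) :
    ∃ M : Fin (q ^ n) → Fin (q ^ n) → ℕ, IsNormal M ∧ IsMultimagic n M := by
  have : Fact q.Prime := ⟨hq⟩
  let E := digits q n
  let G : Fin (q ^ n) × Fin (q ^ n) → Fin (q ^ (n + n)) := fun p =>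
    (digits q (n + n)).symm (entryDigits q n (E p.1) (E p.2))
  have hG : Function.Bijective G := by
    rw [Fintype.bijective_iff_injective_and_card]
    refine ⟨(digits q (n + n)).symm.injective.comp
      ((entryDigits_injective hqn hq5).comp (E.injective.prodMap E.injective)), ?_⟩
    simp [pow_add]
  have hm : (q ^ n) ^ 2 = q ^ (n + n) := by ring
  refine ⟨fun i j => (G (i, j) : ℕ) + 1, ⟨?_, ?_⟩, ?_⟩
  · intro p p' h
    exact hG.1 (Fin.ext (Nat.succ_injective h))
  · ext a
    rw [hm, Set.mem_Icc]
    constructor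
    · rintro ⟨p, rfl⟩
      exact ⟨Nat.succ_pos _, (G p).2⟩
    · rintro ⟨h1, h2⟩
      obtain ⟨p, hp⟩ := hG.2 ⟨a - 1, by omega⟩
      refine ⟨p, ?_⟩
      change (G p : ℕ) + 1 = a
      rw [hp]
      exact Nat.sub_add_cancel h1
  intro d _ hd
  -- The summand `1` of the entries is absorbed into the contribution of digit `0`.
  let h : Fin (n + n) → ZMod q → ℕ := fun i a =>
    ((ZMod.finEquiv q).symm a : ℕ) * q ^ (i : ℕ) + if (i : ℕ) = 0 then 1 else 0
  have hval : ∀ i j, (G (i, j) : ℕ) + 1 = ∑ k, h k (entryDigits q n (E i) (E j) k) := by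
    intro i j
    have h1 : ∑ k : Fin (n + n), (if (k : ℕ) = 0 then 1 else 0) = 1 := by
      rw [Fintype.sum_eq_single ⟨0, by omega⟩]
      · simp
      · intro k hk
        exact if_neg fun h0 => hk (Fin.ext h0)
    simp only [h, G, Finset.sum_add_distrib, h1, digits_symm_val]
  have hsum : ∀ F : (Fin n → ZMod q) → ℕ, ∑ i, F (E i) = ∑ z, F z := fun F => E.sum_comp F
  have hcard : n ≤ Fintype.card (Fin (n + n)) := by simp
  -- The common line sum is that of the reference family of digits `⟨bᵢ, z⟩`.
  have ref : IsUniform fun (z : Fin n → ZMod q) i => codeMatrix q n i ⬝ᵥ z :=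
    isUniform_affine hqn (c := 1) (k := 0) (fun _ => one_ne_zero) (by simp)
  refine ⟨∑ z : Fin n → ZMod q, (∑ k, h k (codeMatrix q n k ⬝ᵥ z)) ^ d, ?_, ?_, ?_, ?_⟩
  · intro i
    simp only [hval]
    rw [hsum fun y => (∑ k, h k (entryDigits q n (E i) y k)) ^ d]
    refine sum_pow_eq hd hcard h (isUniform_affine hqn (c := 1)
      (k := fun t => mult q n t * (codeMatrix q n t ⬝ᵥ E i)) (fun _ => one_ne_zero) ?_) ref
    intro y t
    simp only [entryDigits, Pi.one_apply]
    ring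
  · intro j
    simp only [hval]
    rw [hsum fun x => (∑ k, h k (entryDigits q n x (E j) k)) ^ d]
    exact sum_pow_eq hd hcard h (isUniform_affine hqn (fun t => (mult_ne hq5 t).1)
      fun y t => rfl) ref
  · simp only [hval]
    rw [hsum fun x => (∑ k, h k (entryDigits q n x x k)) ^ d]
    refine sum_pow_eq hd hcard h (isUniform_affine hqn (k := 0)
      (fun t => (mult_ne hq5 t).2.1) ?_) ref
    intro y t
    simp only [entryDigits, Pi.zero_apply]
    ring
  · have hrev : ∀ i, E i.rev = -1 - E i := fun i => funext fun k => digits_rev i k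
    simp only [hval, hrev]
    rw [hsum fun x => (∑ k, h k (entryDigits q n x (-1 - x) k)) ^ d]
    refine sum_pow_eq hd hcard h (isUniform_affine hqn
      (k := fun t => codeMatrix q n t ⬝ᵥ (-1)) (fun t => (mult_ne hq5 t).2.2) ?_) ref
    intro y t
    simp only [entryDigits, dotProduct_sub]
    ring
end

section
/- Let R be a finite commutative ring with q elements and n ≥ 1. For j = 1,…,n let N_{(j)} : R → {0,…,q−1} be a bijection of type c_j ∈ R, with induced bijection N_n : R^n → {1,…,q^n}; for j = 1,…,3n let N'_{(j)} : R → {0,…,q−1} be a bijection of type c'_j ∈ R, with induced bijection N'_{3n} : R^{3n} → {1,…,q^{3n}}. Let A, B, C ∈ Mat_{3n,n}(R) be such that (A B C) ∈ GL_{3n}(R), every n×n minor of each of A, B, C is a unit of R, and every n×n minor of each of A+B+C, −A+B+C, A−B+C, A+B−C is a unit of R. Then for every t ∈ R^{3n} the q^n × q^n × q^n array M defined by M_{N_n(a),N_n(b),N_n(c)} = N'_{3n}((A B C)·(a,b,c) + t) for a, b, c ∈ R^n is a normal n-multimagic cube. -/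
/-!
Write `h x = 1 + ∑ j, q ^ j * N' j (x j)` for `x ∈ R ^ (3n)`. The entry of `M` at
`(Nn a, Nn b, Nn c)` is `h (A a + B b + C c + t)`, so `M` is normal because `(A B C)` is
invertible and base-`q` expansions are unique.

Since all bijections `N j` have a type, `Nn (-a + c)` is the reverse of the index `Nn a`
(`index_rev`). Hence every line sum and every space diagonal sum of the `d`-th power of `M` has the
form `∑ a, h (s + D a) ^ d`, where `D` is one of `A`, `B`, `C`, `A + B + C`, `-A + B + C`,
`A - B + C`, `A + B - C`. Expanding the power gives a sum of products, each depending on at most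
`d ≤ n` coordinates of its argument. For a function `g` of at most `n` coordinates, the unit minors
of `D` let `a ↦ D a` take any prescribed values on these coordinates, so `∑ a, g (s + D a)` does
not depend on `s`; averaging over all `s` identifies it as `q ^ n / q ^ (3n)` times the sum of `g`
over `R ^ (3n)` (`card_mul_sum_of_dependsOn`). This value depends neither on `D` nor on `s`.
-/

/-- A `q × q × q` array of natural numbers is a magic cube if all line sums in the three
axis directions and the sums along the four space diagonals are equal. -/
def IsMagicCube {m : ℕ} (M : Fin m → Fin m → Fin m → ℕ) : Prop :=
  ∃ S : ℕ,
    (∀ j k, (∑ i, M i j k) = S) ∧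
    (∀ i k, (∑ j, M i j k) = S) ∧
    (∀ i j, (∑ k, M i j k) = S) ∧
    (∑ i, M i i i) = S ∧
    (∑ i, M i i i.rev) = S ∧
    (∑ i, M i i.rev i) = S ∧
    (∑ i, M i.rev i i) = S

/-- A magic cube is perfect if moreover both diagonals of every orthogonal slice have the
magic sum. -/
def IsPerfectMagicCube {m : ℕ} (M : Fin m → Fin m → Fin m → ℕ) : Prop :=
  ∃ S : ℕ,
    (∀ j k, (∑ i, M i j k) = S) ∧
    (∀ i k, (∑ j, M i j k) = S) ∧
    (∀ i j, (∑ k, M i j k) = S) ∧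
    (∑ i, M i i i) = S ∧
    (∑ i, M i i i.rev) = S ∧
    (∑ i, M i i.rev i) = S ∧
    (∑ i, M i.rev i i) = S ∧
    (∀ i, (∑ j, M i j j) = S) ∧
    (∀ i, (∑ j, M i j j.rev) = S) ∧
    (∀ j, (∑ i, M i j i) = S) ∧
    (∀ j, (∑ i, M i j i.rev) = S) ∧
    (∀ k, (∑ i, M i i k) = S) ∧
    (∀ k, (∑ i, M i i.rev k) = S)

/-- A cube is normal if its entries are exactly `1, 2, …, m³`, each occurring once. -/
def IsNormalCube {m : ℕ} (M : Fin m → Fin m → Fin m → ℕ) : Prop :=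
  Function.Injective (fun p : Fin m × Fin m × Fin m => M p.1 p.2.1 p.2.2) ∧
  Set.range (fun p : Fin m × Fin m × Fin m => M p.1 p.2.1 p.2.2) = Set.Icc 1 (m ^ 3)

/-- `M` is an `n`-multimagic cube if the entrywise `d`-th power of `M` is a magic cube
for `d = 1, …, n`. -/
def IsMultimagicCube {m : ℕ} (n : ℕ) (M : Fin m → Fin m → Fin m → ℕ) : Prop :=
  ∀ d, 1 ≤ d → d ≤ n → IsMagicCube (fun i j k => M i j k ^ d)

/-- `M` is a perfect `n`-multimagic cube if the entrywise `d`-th power of `M` is a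
perfect magic cube for `d = 1, …, n`. -/
def IsPerfectMultimagicCube {m : ℕ} (n : ℕ) (M : Fin m → Fin m → Fin m → ℕ) : Prop :=
  ∀ d, 1 ≤ d → d ≤ n → IsPerfectMagicCube (fun i j k => M i j k ^ d)

/-- The `(3n) × (3n)` matrix `(A B C)` obtained by placing `A`, `B`, `C` side by side. -/
def fromCols3 {R : Type*} {n : ℕ} (A B C : Matrix (Fin (3 * n)) (Fin n) R) :
    Matrix (Fin (3 * n)) (Fin (3 * n)) R :=
  fun i j =>
    if h : (j : ℕ) < n then A i ⟨j, h⟩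
    else if h2 : (j : ℕ) < 2 * n then B i ⟨(j : ℕ) - n, by omega⟩
    else C i ⟨(j : ℕ) - 2 * n, by have := j.isLt; omega⟩

/-- The concatenation of three vectors of length `n` into a vector of length `3n`. -/
def concat3 {R : Type*} {n : ℕ} (a b c : Fin n → R) : Fin (3 * n) → R :=
  fun j =>
    if h : (j : ℕ) < n then a ⟨j, h⟩
    else if h2 : (j : ℕ) < 2 * n then b ⟨(j : ℕ) - n, by omega⟩
    else c ⟨(j : ℕ) - 2 * n, by have := j.isLt; omega⟩

/-- A matrix with unit `n × n` minors takes arbitrary prescribed values on any set of at most `n`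
coordinates. -/
lemma MinorsUnit.exists_mulVec_eq {R : Type*} [CommRing R] {m n : ℕ}
    {D : Matrix (Fin m) (Fin n) R} (hD : MinorsUnit D) (hnm : n ≤ m) (T : Finset (Fin m))
    (hT : T.card ≤ n) (x : Fin m → R) : ∃ a : Fin n → R, ∀ j ∈ T, D.mulVec a j = x j := by
  obtain ⟨T', hTT', hT'⟩ := Finset.exists_superset_card_eq hT (by simpa using hnm)
  have hu := hD (T'.orderEmbOfFin hT') (T'.orderEmbOfFin hT').strictMono
  set r := T'.orderEmbOfFin hT' with hr
  refine ⟨(D.submatrix r id)⁻¹.mulVec (x ∘ r), fun j hj => ?_⟩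
  have hj' : j ∈ Set.range r := by
    rw [hr, Finset.range_orderEmbOfFin]
    exact hTT' hj
  obtain ⟨i, rfl⟩ := hj'
  have h : (D.submatrix r id).mulVec ((D.submatrix r id)⁻¹.mulVec (x ∘ r)) = x ∘ r := by
    rw [Matrix.mulVec_mulVec, Matrix.mul_nonsing_inv _ hu, Matrix.one_mulVec]
  exact congrFun h i

/-- If `g` depends on at most `n` coordinates, its sum over the affine image `s + D a` does not
depend on `s` or `D`: it is a fixed multiple of the sum of `g` over the whole space. -/
lemma card_mul_sum_of_dependsOn {R : Type*} [CommRing R] [Fintype R] {m n : ℕ}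
    {D : Matrix (Fin m) (Fin n) R} (hD : MinorsUnit D) (hnm : n ≤ m) (T : Finset (Fin m))
    (hT : T.card ≤ n) (g : (Fin m → R) → ℕ) (hg : DependsOn g (T : Set (Fin m)))
    (s : Fin m → R) :
    Fintype.card (Fin m → R) * ∑ a : Fin n → R, g (s + D.mulVec a)
      = Fintype.card (Fin n → R) * ∑ x, g x := by
  have h1 : ∀ x : Fin m → R, ∑ a, g (x + D.mulVec a) = ∑ a, g (s + D.mulVec a) := by
    intro x
    obtain ⟨a₀, ha₀⟩ := hD.exists_mulVec_eq hnm T hT (x - s)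
    rw [← Equiv.sum_comp (Equiv.addLeft a₀) (fun a => g (s + D.mulVec a))]
    refine Finset.sum_congr rfl fun a _ => hg fun j hj => ?_
    simp [Matrix.mulVec_add, ha₀ j hj, ← add_assoc]
  have h2 : ∀ a : Fin n → R, ∑ x, g (x + D.mulVec a) = ∑ x, g x := fun a =>
    Equiv.sum_comp (Equiv.addRight (D.mulVec a)) g
  -- Both sides evaluate the double sum of `g (x + D a)` over `x` and `a`.
  have h3 := Finset.sum_comm (s := Finset.univ) (t := Finset.univ)
    (f := fun (x : Fin m → R) (a : Fin n → R) => g (x + D.mulVec a))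
  simpa [h1, h2] using h3

/-- The power sum of a separable function `x ↦ ∑ j, w j (x j)` over the affine image `s + D a`,
for exponents at most `n`, is the same for all `s` and all `D` with unit minors. -/
lemma card_mul_sum_pow {R : Type*} [CommRing R] [Fintype R] {m n : ℕ}
    {D : Matrix (Fin m) (Fin n) R} (hD : MinorsUnit D) (hnm : n ≤ m) {d : ℕ} (hd : d ≤ n)
    (w : Fin m → R → ℕ) (s : Fin m → R) :
    Fintype.card (Fin m → R) * ∑ a : Fin n → R, (∑ j, w j ((s + D.mulVec a) j)) ^ d
      = Fintype.card (Fin n → R) * ∑ x : Fin m → R, (∑ j, w j (x j)) ^ d := by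
  simp only [Fintype.sum_pow]
  rw [Finset.sum_comm, Finset.sum_comm (s := Finset.univ (α := Fin m → R)), Finset.mul_sum,
    Finset.mul_sum]
  refine Finset.sum_congr rfl fun f _ => ?_
  refine card_mul_sum_of_dependsOn hD hnm (Finset.univ.image f)
    (Finset.card_image_le.trans (by simpa using hd)) (fun x => ∏ i, w (f i) (x (f i))) ?_ s
  intro x y hxy
  exact Finset.prod_congr rfl fun i _ => by rw [hxy (f i) (by simp)]

lemma sum_pow_eq_s11 {R : Type*} [CommRing R] [Fintype R] {m n : ℕ}
    {D E : Matrix (Fin m) (Fin n) R} (hD : MinorsUnit D) (hE : MinorsUnit E) (hnm : n ≤ m)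
    {d : ℕ} (hd : d ≤ n) (w : Fin m → R → ℕ) (s u : Fin m → R) :
    ∑ a : Fin n → R, (∑ j, w j ((s + D.mulVec a) j)) ^ d
      = ∑ a : Fin n → R, (∑ j, w j ((u + E.mulVec a) j)) ^ d :=
  Nat.eq_of_mul_eq_mul_left Fintype.card_pos
    ((card_mul_sum_pow hD hnm hd w s).trans (card_mul_sum_pow hE hnm hd w u).symm)

lemma sum_univ_three_mul {S : Type*} [AddCommMonoid S] {n : ℕ} (G : Fin (3 * n) → S) :
    ∑ j, G j = ∑ i : Fin n, G ⟨i, by omega⟩ + ∑ i : Fin n, G ⟨n + i, by omega⟩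
      + ∑ i : Fin n, G ⟨2 * n + i, by omega⟩ := by
  have h : n + n + n = 3 * n := by ring
  rw [← Equiv.sum_comp (finCongr h) G, Fin.sum_univ_add, Fin.sum_univ_add]
  congr 1
  refine Finset.sum_congr rfl fun i _ => congrArg G (Fin.ext ?_)
  simp
  ring

lemma fromCols3_mulVec_concat3 {R : Type*} [CommRing R] {n : ℕ}
    (A B C : Matrix (Fin (3 * n)) (Fin n) R) (a b c : Fin n → R) :
    (fromCols3 A B C).mulVec (concat3 a b c) = A.mulVec a + B.mulVec b + C.mulVec c := by
  funext i
  simp only [Matrix.mulVec, dotProduct, Pi.add_apply]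
  rw [sum_univ_three_mul]
  congr 1
  · congr 1
    · refine Finset.sum_congr rfl fun j _ => ?_
      simp [fromCols3, concat3]
    · refine Finset.sum_congr rfl fun j _ => ?_
      have h : n + (j : ℕ) < 2 * n := by omega
      simp [fromCols3, concat3, h]
  · refine Finset.sum_congr rfl fun j _ => ?_
    have h : ¬ (2 * n + (j : ℕ) < n) := by omega
    simp [fromCols3, concat3, h]

lemma concat3_injective {R : Type*} {n : ℕ} {a b c a' b' c' : Fin n → R}
    (h : concat3 a b c = concat3 a' b' c') : a = a' ∧ b = b' ∧ c = c' := by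
  refine ⟨funext fun i => ?_, funext fun i => ?_, funext fun i => ?_⟩
  · simpa [concat3] using congrFun h ⟨i, by omega⟩
  · have h2 : n + (i : ℕ) < 2 * n := by omega
    simpa [concat3, h2] using congrFun h ⟨n + i, by omega⟩
  · have h2 : ¬ (2 * n + (i : ℕ) < n) := by omega
    simpa [concat3, h2] using congrFun h ⟨2 * n + i, by omega⟩

/-- The two digits in position `j` of `Nn a` and `Nn (-a + c)` add up to `q - 1`, so the two
indices add up to `q ^ n - 1`. -/
lemma index_rev {R : Type*} [CommRing R] {q n : ℕ} (c : Fin n → R) (N : Fin n → R ≃ Fin q)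
    (hN : ∀ (j : Fin n) (a : R), ((N j a : ℕ) + (N j (-a + c j) : ℕ)) = q - 1)
    (hq : 0 < q) (Nn : (Fin n → R) ≃ Fin (q ^ n))
    (hNn : ∀ a : Fin n → R, (Nn a : ℕ) = ∑ j : Fin n, q ^ (j : ℕ) * (N j (a j) : ℕ))
    (a : Fin n → R) : (Nn a).rev = Nn (-a + c) := by
  have h : (Nn a : ℕ) + Nn (-a + c) + 1 = q ^ n := by
    rw [hNn, hNn, ← Finset.sum_add_distrib]
    simp only [← mul_add, Pi.add_apply, Pi.neg_apply, hN]
    rw [← Finset.sum_mul, Fin.sum_univ_eq_sum_range (fun i => q ^ i)]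
    obtain ⟨k, rfl⟩ := Nat.exists_eq_add_of_lt hq
    simpa using geom_sum_mul_add k n
  ext
  rw [Fin.val_rev]
  omega

lemma digits_injective {R : Type*} {q m : ℕ} (N : Fin m → R ≃ Fin q) {x y : Fin m → R}
    (h : ∑ j : Fin m, q ^ (j : ℕ) * (N j (x j) : ℕ) = ∑ j : Fin m, q ^ (j : ℕ) * (N j (y j) : ℕ)) :
    x = y := by
  have h1 : finFunctionFinEquiv (fun j => N j (x j)) = finFunctionFinEquiv (fun j => N j (y j)) := by
    ext
    simpa [finFunctionFinEquiv_apply, mul_comm] using h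
  funext j
  exact (N j).injective (congrFun (finFunctionFinEquiv.injective h1) j)

lemma digits_lt {R : Type*} {q m : ℕ} (N : Fin m → R ≃ Fin q) (x : Fin m → R) :
    ∑ j : Fin m, q ^ (j : ℕ) * (N j (x j) : ℕ) < q ^ m := by
  simpa [finFunctionFinEquiv_apply, mul_comm] using
    (finFunctionFinEquiv (fun j => N j (x j))).isLt

/-- Let `R` be a finite commutative ring with `q` elements, `n ≥ 1`, with bijections
`N_(j) : R ≃ {0, …, q−1}` of types `c_j` (`j = 1, …, n`) inducing
`N_n : R^n ≃ {1, …, q^n}`, and bijections `N'_(j)` of types `c'_j` (`j = 1, …, 3n`)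
inducing `N'_{3n}`.  Let `A, B, C ∈ Mat_{3n,n}(R)` be such that `(A B C)` is invertible,
all `n × n` minors of `A`, `B`, `C` are units and all `n × n` minors of `A+B+C`,
`−A+B+C`, `A−B+C`, `A+B−C` are units.  Then for every `t ∈ R^{3n}` the cube `M` with
`M_{N_n(a), N_n(b), N_n(c)} = N'_{3n}((A B C)·(a,b,c) + t)` is a normal `n`-multimagic
cube.  (The bijection `N_n` is encoded by an equivalence `Nn : R^n ≃ Fin (q^n)` whose
`0`-based value satisfies `(Nn a : ℕ) = Σ_j q^(j−1) N_(j)(a_j)`.) -/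
theorem multimagic_cube_of_generator_matrix
    (R : Type*) [CommRing R] [Fintype R] (q n : ℕ) (hq : Fintype.card R = q) (hn : 1 ≤ n)
    (c : Fin n → R) (N : Fin n → R ≃ Fin q)
    (hN : ∀ (j : Fin n) (a : R), ((N j a : ℕ) + (N j (-a + c j) : ℕ)) = q - 1)
    (c' : Fin (3 * n) → R) (N' : Fin (3 * n) → R ≃ Fin q)
    (hN' : ∀ (j : Fin (3 * n)) (a : R), ((N' j a : ℕ) + (N' j (-a + c' j) : ℕ)) = q - 1)
    (Nn : (Fin n → R) ≃ Fin (q ^ n))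
    (hNn : ∀ a : Fin n → R, (Nn a : ℕ) = ∑ j : Fin n, q ^ (j : ℕ) * (N j (a j) : ℕ))
    (A B C : Matrix (Fin (3 * n)) (Fin n) R)
    (hX : IsUnit (fromCols3 A B C).det)
    (hA : MinorsUnit A) (hB : MinorsUnit B) (hC : MinorsUnit C)
    (hABC : MinorsUnit (A + B + C)) (hABC1 : MinorsUnit (-A + B + C))
    (hABC2 : MinorsUnit (A - B + C)) (hABC3 : MinorsUnit (A + B - C))
    (t : Fin (3 * n) → R)
    (M : Fin (q ^ n) → Fin (q ^ n) → Fin (q ^ n) → ℕ)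
    (hM : ∀ a b c : Fin n → R,
      M (Nn a) (Nn b) (Nn c)
        = 1 + ∑ j : Fin (3 * n),
            q ^ (j : ℕ) * ((N' j) (((fromCols3 A B C).mulVec (concat3 a b c) + t) j) : ℕ)) :
    IsNormalCube M ∧ IsMultimagicCube n M := by
  have hq0 : 0 < q := hq ▸ Fintype.card_pos
  have hrev := index_rev c N hN hq0 Nn hNn
  simp only [fromCols3_mulVec_concat3] at hM
  refine ⟨?_, ?_⟩
  · have hinj : Function.Injective
        (fun p : Fin (q ^ n) × Fin (q ^ n) × Fin (q ^ n) => M p.1 p.2.1 p.2.2) := by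
      rintro ⟨i, j, k⟩ ⟨i', j', k'⟩ h
      obtain ⟨a, rfl⟩ := Nn.surjective i
      obtain ⟨b, rfl⟩ := Nn.surjective j
      obtain ⟨e, rfl⟩ := Nn.surjective k
      obtain ⟨a', rfl⟩ := Nn.surjective i'
      obtain ⟨b', rfl⟩ := Nn.surjective j'
      obtain ⟨e', rfl⟩ := Nn.surjective k'
      simp only [hM] at h
      have h1 := add_right_cancel (digits_injective N' (Nat.add_left_cancel h))
      rw [← fromCols3_mulVec_concat3, ← fromCols3_mulVec_concat3] at h1
      obtain ⟨rfl, rfl, rfl⟩ := concat3_injective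
        (Matrix.mulVec_injective_of_isUnit ((Matrix.isUnit_iff_isUnit_det _).2 hX) h1)
      rfl
    refine ⟨hinj, ?_⟩
    have hsub : Finset.univ.image
        (fun p : Fin (q ^ n) × Fin (q ^ n) × Fin (q ^ n) => M p.1 p.2.1 p.2.2)
        ⊆ Finset.Icc 1 ((q ^ n) ^ 3) := by
      intro v hv
      obtain ⟨⟨i, j, k⟩, -, rfl⟩ := Finset.mem_image.1 hv
      obtain ⟨a, rfl⟩ := Nn.surjective i
      obtain ⟨b, rfl⟩ := Nn.surjective j
      obtain ⟨e, rfl⟩ := Nn.surjective k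
      have h := digits_lt N' (A.mulVec a + B.mulVec b + C.mulVec e + t)
      have hp : q ^ (3 * n) = (q ^ n) ^ 3 := by rw [mul_comm 3 n, pow_mul]
      simp only [hM, Finset.mem_Icc]
      omega
    have heq := Finset.eq_of_subset_of_card_le hsub (by
      rw [Finset.card_image_of_injective _ hinj]
      simp only [Nat.card_Icc, Finset.card_univ, Fintype.card_prod, Fintype.card_fin]
      apply le_of_eq
      rw [Nat.add_sub_cancel]
      ring)
    simpa using congrArg (fun s : Finset ℕ => (s : Set ℕ)) heq
  · intro d _ hd
    have hnm : n ≤ 3 * n := by omega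
    -- The summand `1` is put into the digit function of the first coordinate.
    let w : Fin (3 * n) → R → ℕ := fun j r =>
      (if j = ⟨0, by omega⟩ then 1 else 0) + q ^ (j : ℕ) * (N' j r : ℕ)
    have hMw : ∀ a b e : Fin n → R, M (Nn a) (Nn b) (Nn e)
        = ∑ j, w j ((A.mulVec a + B.mulVec b + C.mulVec e + t) j) := by
      intro a b e
      rw [hM]
      simp [w, Finset.sum_add_distrib]
    have key : ∀ (D : Matrix (Fin (3 * n)) (Fin n) R) (s : Fin (3 * n) → R)
        (f : (Fin n → R) → ℕ), MinorsUnit D →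
        (∀ a, ∃ v, f a = ∑ j, w j (v j) ∧ v = s + D.mulVec a) →
        ∑ a, f a ^ d = ∑ a : Fin n → R, (∑ j, w j ((0 + A.mulVec a) j)) ^ d := by
      intro D s f hD hf
      have hf' : ∀ a, f a = ∑ j, w j ((s + D.mulVec a) j) := fun a => by
        obtain ⟨v, hv, rfl⟩ := hf a
        exact hv
      simp only [hf']
      exact sum_pow_eq_s11 hD hA hnm hd w s 0
    refine ⟨∑ a : Fin n → R, (∑ j, w j ((0 + A.mulVec a) j)) ^ d,
      ?_, ?_, ?_, ?_, ?_, ?_, ?_⟩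
    · intro j k
      obtain ⟨b, rfl⟩ := Nn.surjective j
      obtain ⟨e, rfl⟩ := Nn.surjective k
      rw [← Equiv.sum_comp Nn]
      refine key A (B.mulVec b + C.mulVec e + t) _ hA fun a => ?_
      refine ⟨_, hMw _ _ _, ?_⟩
      abel
    · intro i k
      obtain ⟨a, rfl⟩ := Nn.surjective i
      obtain ⟨e, rfl⟩ := Nn.surjective k
      rw [← Equiv.sum_comp Nn]
      refine key B (A.mulVec a + C.mulVec e + t) _ hB fun b => ?_
      refine ⟨_, hMw _ _ _, ?_⟩
      abel
    · intro i j
      obtain ⟨a, rfl⟩ := Nn.surjective i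
      obtain ⟨b, rfl⟩ := Nn.surjective j
      rw [← Equiv.sum_comp Nn]
      refine key C (A.mulVec a + B.mulVec b + t) _ hC fun e => ?_
      refine ⟨_, hMw _ _ _, ?_⟩
      abel
    · rw [← Equiv.sum_comp Nn]
      refine key (A + B + C) t _ hABC fun a => ?_
      refine ⟨_, hMw _ _ _, ?_⟩
      simp only [Matrix.add_mulVec]
      abel
    · rw [← Equiv.sum_comp Nn]
      refine key (A + B - C) (C.mulVec c + t) _ hABC3 fun a => ?_
      rw [hrev]
      refine ⟨_, hMw _ _ _, ?_⟩
      simp only [Matrix.add_mulVec, Matrix.sub_mulVec, Matrix.mulVec_add, Matrix.mulVec_neg]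
      abel
    · rw [← Equiv.sum_comp Nn]
      refine key (A - B + C) (B.mulVec c + t) _ hABC2 fun a => ?_
      rw [hrev]
      refine ⟨_, hMw _ _ _, ?_⟩
      simp only [Matrix.add_mulVec, Matrix.sub_mulVec, Matrix.mulVec_add, Matrix.mulVec_neg]
      abel
    · rw [← Equiv.sum_comp Nn]
      refine key (-A + B + C) (A.mulVec c + t) _ hABC1 fun a => ?_
      rw [hrev]
      refine ⟨_, hMw _ _ _, ?_⟩
      simp only [Matrix.add_mulVec, Matrix.neg_mulVec, Matrix.mulVec_add, Matrix.mulVec_neg]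
      abel
end

section
/- Let n ≥ 1 and d ≥ 2 be integers. Then there exist an integer q > 1 and matrices A_1, …, A_d ∈ Mat_{dn,n}(ℤ/qℤ) such that X = (A_1 ⋯ A_d) ∈ GL_{dn}(ℤ/qℤ) and, for every (δ_1,…,δ_d) ∈ {−1,0,1}^d not all zero, every n×n minor of the matrix Σ_{i=1}^d δ_i A_i is a unit of ℤ/qℤ; i.e. X is an n-multimagic d-generator matrix over ℤ/qℤ. -/
/-- The `(dn) × (dn)` matrix `(A_1 ⋯ A_d)` obtained by placing the `(dn) × n` matrices
`A_1, …, A_d` side by side (requires `0 < n`). -/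
def bigBlock {R : Type*} (d n : ℕ) (hn : 0 < n)
    (A : Fin d → Matrix (Fin (d * n)) (Fin n) R) :
    Matrix (Fin (d * n)) (Fin (d * n)) R :=
  fun i j =>
    A ⟨(j : ℕ) / n, Nat.div_lt_of_lt_mul (Nat.mul_comm d n ▸ j.isLt)⟩
      i ⟨(j : ℕ) % n, Nat.mod_lt _ hn⟩

/-- If `k` is the position of the lowest nonzero digit, then `B ^ k` divides the sum and
`B ^ (k + 1)` does not; the induction on the number of digits peels off the digit at `0`. -/
lemma sum_digits_ne_zero (B : ℤ) (hB : 2 ≤ B) (d : ℕ) (δ : Fin d → ℤ)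
    (h : ∀ i, δ i = -1 ∨ δ i = 0 ∨ δ i = 1) (hne : ∃ i, δ i ≠ 0) :
    ∑ k, δ k * B ^ (k : ℕ) ≠ 0 := by
  induction d with
  | zero => exact hne.elim fun i => i.elim0
  | succ d ih =>
    have key : ∑ k, δ k * B ^ (k : ℕ) = δ 0 + B * ∑ k : Fin d, δ k.succ * B ^ (k : ℕ) := by
      rw [Fin.sum_univ_succ, Finset.mul_sum]
      simp only [Fin.val_zero, pow_zero, mul_one, Fin.val_succ]
      congr 1
      refine Finset.sum_congr rfl fun k _ => ?_
      ring
    rw [key]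
    by_cases h0 : δ 0 = 0
    · rw [h0, zero_add]
      refine mul_ne_zero (by lia) (ih _ (fun i => h _) ?_)
      obtain ⟨i, hi⟩ := hne
      cases i using Fin.cases with
      | zero => exact absurd h0 hi
      | succ i => exact ⟨i, hi⟩
    · intro hs
      have hdvd : B ∣ δ 0 := ⟨-∑ k : Fin d, δ k.succ * B ^ (k : ℕ), by linarith⟩
      have hone : B ∣ 1 := by
        rcases h 0 with h1 | h1 | h1
        · rwa [h1, dvd_neg] at hdvd
        · exact absurd h1 h0
        · rwa [h1] at hdvd
      have := Int.le_of_dvd one_pos hone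
      lia

lemma abs_sum_digits_le (x N : ℤ) (n d : ℕ) (hx : 1 ≤ x) (hxN : x ≤ N) (δ : Fin d → ℤ)
    (h : ∀ i, δ i = -1 ∨ δ i = 0 ∨ δ i = 1) :
    |∑ k, δ k * x ^ (n * (k : ℕ))| ≤ d * N ^ (n * d) := by
  calc |∑ k, δ k * x ^ (n * (k : ℕ))| ≤ ∑ k, |δ k * x ^ (n * (k : ℕ))| :=
        Finset.abs_sum_le_sum_abs _ _
    _ ≤ ∑ _k : Fin d, N ^ (n * d) := by
        refine Finset.sum_le_sum fun k _ => ?_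
        have h1 : |δ k| ≤ 1 := by rcases h k with h | h | h <;> simp [h]
        have h2 : x ^ (n * (k : ℕ)) ≤ N ^ (n * d) :=
          (pow_le_pow_left₀ (by lia) hxN _).trans
            (pow_le_pow_right₀ (by lia) (Nat.mul_le_mul_left n k.isLt.le))
        have h3 : 0 ≤ x ^ (n * (k : ℕ)) := pow_nonneg (by lia) _
        rw [abs_mul, abs_of_nonneg h3]
        nlinarith
    _ = d * N ^ (n * d) := by simp

/-- For all `n ≥ 1` and `d ≥ 2` one can find an integer `q > 1` and matrices
`A_1, …, A_d ∈ Mat_{dn,n}(ℤ/qℤ)` such that `X = (A_1 ⋯ A_d)` is invertible and for every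
`(δ_1, …, δ_d) ∈ {−1, 0, 1}^d`, not all zero, all `n × n` minors of `Σ_i δ_i A_i` are
units of `ℤ/qℤ`; that is, `X` is an `n`-multimagic `d`-generator matrix. -/
theorem exists_multimagic_d_generator_matrix (n d : ℕ) (hn : 1 ≤ n) (hd : 2 ≤ d) :
    ∃ (q : ℕ) (_ : 1 < q) (A : Fin d → Matrix (Fin (d * n)) (Fin n) (ZMod q)),
      IsUnit (bigBlock d n hn A).det ∧
      ∀ δ : Fin d → ℤ, (∀ i, δ i = -1 ∨ δ i = 0 ∨ δ i = 1) → (∃ i, δ i ≠ 0) →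
        MinorsUnit (∑ i, δ i • A i) := by
  obtain ⟨q, hq, hprime⟩ := Nat.exists_infinite_primes (d * (d * n + 2) ^ (n * d) + (d * n + 2))
  haveI : Fact q.Prime := ⟨hprime⟩
  let x : Fin (d * n) → ZMod q := fun i => ((i : ℕ) + 2 : ℕ)
  have hinj : Function.Injective x := by
    intro i j hij
    have h1 := (ZMod.natCast_eq_natCast_iff' _ _ _).1 hij
    rw [Nat.mod_eq_of_lt (by lia), Nat.mod_eq_of_lt (by lia)] at h1
    exact Fin.ext (by lia)
  refine ⟨q, hprime.one_lt, fun k => Matrix.of fun i j => x i ^ (n * (k : ℕ) + (j : ℕ)), ?_, ?_⟩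
  · have : bigBlock d n hn (fun k => Matrix.of fun i j => x i ^ (n * (k : ℕ) + (j : ℕ)))
        = Matrix.vandermonde x := by
      ext i j
      simp [bigBlock, Matrix.vandermonde_apply, Nat.div_add_mod]
    rw [this, isUnit_iff_ne_zero]
    exact Matrix.det_vandermonde_ne_zero_iff.2 hinj
  · intro δ hδ hne r hr
    have hp : ∀ i, ∑ k, (δ k : ZMod q) * x i ^ (n * (k : ℕ)) ≠ 0 := by
      intro i h0
      have hcast : ((∑ k, δ k * (((i : ℕ) : ℤ) + 2) ^ (n * (k : ℕ)) : ℤ) : ZMod q) = 0 := by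
        rw [← h0]
        push_cast [x]
        rfl
      have hdvd := (ZMod.intCast_zmod_eq_zero_iff_dvd _ q).1 hcast
      have hnz : ∑ k, δ k * (((i : ℕ) : ℤ) + 2) ^ (n * (k : ℕ)) ≠ 0 := by
        simp only [pow_mul]
        refine sum_digits_ne_zero _ ?_ d δ hδ hne
        exact le_trans (by lia) (le_self_pow₀ (by lia) (by lia : n ≠ 0))
      have hle := abs_sum_digits_le (((i : ℕ) : ℤ) + 2) ((d * n + 2 : ℕ) : ℤ) n d (by lia)
        (by have := i.isLt; lia) δ hδ
      have hge := Int.le_of_dvd (abs_pos.2 hnz) ((dvd_abs _ _).2 hdvd)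
      have : (q : ℤ) ≤ ((d * (d * n + 2) ^ (n * d) : ℕ) : ℤ) := by
        push_cast at hle ⊢
        exact hge.trans hle
      have := Int.ofNat_le.1 this
      lia
    have hmat : (∑ k, δ k • (Matrix.of fun i j => x i ^ (n * (k : ℕ) + (j : ℕ)) :
          Matrix (Fin (d * n)) (Fin n) (ZMod q))).submatrix r id
        = Matrix.of fun i j => (∑ k, (δ k : ZMod q) * x (r i) ^ (n * (k : ℕ))) *
            Matrix.vandermonde (x ∘ r) i j := by
      ext i j
      simp only [Matrix.submatrix_apply, Matrix.sum_apply, Matrix.smul_apply, Matrix.of_apply,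
        Matrix.vandermonde_apply, Finset.sum_mul, zsmul_eq_mul, id, Function.comp, pow_add,
        mul_assoc]
    rw [hmat, Matrix.det_mul_column, isUnit_iff_ne_zero]
    exact mul_ne_zero (Finset.prod_ne_zero_iff.2 fun i _ => hp (r i))
      (Matrix.det_vandermonde_ne_zero_iff.2 (hinj.comp hr.injective))
end

section
/- Let M be a normal n-multimagic square of order m. Then m divides the binomial coefficient C(m², n+1). -/
open Polynomial in
/-- A polynomial of degree at most `n` has the same sum over all rows of an `n`-multimagic
square. -/
theorem IsMultimagic.sum_eval_row_eq {n m : ℕ} {M : Fin m → Fin m → ℕ} (hM : IsMultimagic n M)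
    (P : ℤ[X]) (hP : P.natDegree ≤ n) (i i' : Fin m) :
    ∑ j, P.eval (M i j : ℤ) = ∑ j, P.eval (M i' j : ℤ) := by
  simp only [eval_eq_sum_range' (Nat.lt_succ_of_le hP)]
  rw [Finset.sum_comm, Finset.sum_comm (s := Finset.univ (α := Fin m))]
  refine Finset.sum_congr rfl fun d hd => ?_
  rw [← Finset.mul_sum, ← Finset.mul_sum]
  congr 1
  rcases Nat.eq_zero_or_pos d with rfl | hd0
  · simp
  · obtain ⟨S, hS, -⟩ := hM d hd0 (Nat.lt_succ_iff.mp (Finset.mem_range.mp hd))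
    exact_mod_cast (hS i).trans (hS i').symm

open Polynomial in
theorem IsMultimagic.sum_choose_row_eq {n m : ℕ} {M : Fin m → Fin m → ℕ} (hM : IsMultimagic n M)
    (hpos : ∀ i j, 1 ≤ M i j) (i i' : Fin m) :
    ∑ j, (M i j - 1).choose n = ∑ j, (M i' j - 1).choose n := by
  have hdeg : ((descPochhammer ℤ n).comp (X - 1)).natDegree ≤ n := by
    have hX : (X - 1 : ℤ[X]).natDegree = 1 := by
      simpa using natDegree_X_sub_C (1 : ℤ)
    rw [natDegree_comp, descPochhammer_natDegree, hX, mul_one]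
  have heval : ∀ a b, ((descPochhammer ℤ n).comp (X - 1)).eval (M a b : ℤ)
      = ((n.factorial * (M a b - 1).choose n : ℕ) : ℤ) := by
    intro a b
    rw [← Nat.descFactorial_eq_factorial_mul_choose, ← descPochhammer_eval_eq_descFactorial,
      eval_comp, Nat.cast_sub (hpos a b)]
    simp
  have h := hM.sum_eval_row_eq _ hdeg i i'
  simp only [heval] at h
  rw [← Nat.cast_sum, ← Nat.cast_sum, Nat.cast_inj, ← Finset.mul_sum, ← Finset.mul_sum] at h
  exact Nat.eq_of_mul_eq_mul_left n.factorial_pos h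

/-- The hockey-stick identity, in the form summing over `{1, …, N}`. -/
theorem sum_Icc_pred_choose (N n : ℕ) :
    ∑ x ∈ Finset.Icc 1 N, (x - 1).choose n = N.choose (n + 1) := by
  induction N with
  | zero => simp
  | succ N ih =>
    rw [Finset.sum_Icc_succ_top (by omega), ih, Nat.choose_succ_succ', Nat.add_sub_cancel, add_comm]

/-- If `M` is a normal `n`-multimagic square of order `m`, then `m` divides the binomial
coefficient `C(m², n+1)`. -/
theorem order_dvd_choose_of_multimagic
    (n m : ℕ) (M : Fin m → Fin m → ℕ)
    (hnorm : IsNormal M) (hmagic : IsMultimagic n M) :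
    m ∣ (m ^ 2).choose (n + 1) := by
  obtain ⟨hinj, hrange⟩ := hnorm
  have hpos : ∀ i j, 1 ≤ M i j := fun i j =>
    (hrange ▸ Set.mem_range_self (i, j) : M i j ∈ Set.Icc 1 (m ^ 2)).1
  have himage : Finset.univ.image (fun p : Fin m × Fin m => M p.1 p.2)
      = Finset.Icc 1 (m ^ 2) := by
    apply Finset.coe_injective
    simpa using hrange
  rw [← sum_Icc_pred_choose, ← himage, Finset.sum_image hinj.injOn, Fintype.sum_prod_type]
  -- For `m = 0` there is no row to compare with.
  rcases Nat.eq_zero_or_pos m with rfl | hm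
  · simp
  · rw [Finset.sum_congr rfl fun i _ => hmagic.sum_choose_row_eq hpos i ⟨0, hm⟩]
    simp
end

section
/- Let M = (m_{i,j}) be a normal n-multimagic square of order m, and let f ∈ ℚ[x] be a polynomial of degree at most n with f(ℤ) ⊆ ℤ. Then the m×m integer matrix M^{∘f} = (f(m_{i,j})) is a magic square: all its row sums, all its column sums, its main diagonal sum, and its antidiagonal sum are equal. -/
/-- A rational-valued `m × m` matrix is a magic square if all row sums, all column sums,
the main diagonal sum and the antidiagonal sum are equal. -/
def IsMagicSquareRat {m : ℕ} (M : Fin m → Fin m → ℚ) : Prop :=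
  ∃ S : ℚ,
    (∀ i, (∑ j, M i j) = S) ∧
    (∀ j, (∑ i, M i j) = S) ∧
    (∑ i, M i i) = S ∧
    (∑ i, M i i.rev) = S

/-- A polynomial of degree at most `n` has a sum over a line that depends only on the power
sums of the line of exponents `0, …, n`. -/
theorem sum_eval_eq_of_sum_pow {m n : ℕ} (f : Polynomial ℚ) (hdeg : f.natDegree ≤ n)
    (S : ℕ → ℕ) (g : Fin m → ℕ) (hg : ∀ d ≤ n, ∑ k, g k ^ d = S d) :
    ∑ k, f.eval (g k : ℚ) = ∑ d ∈ Finset.range (n + 1), f.coeff d * (S d : ℚ) := by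
  simp_rw [Polynomial.eval_eq_sum_range' (Nat.lt_succ_of_le hdeg)]
  rw [Finset.sum_comm]
  refine Finset.sum_congr rfl fun d hd => ?_
  rw [← hg d (Nat.lt_succ_iff.mp (Finset.mem_range.mp hd)), ← Finset.mul_sum]
  push_cast
  rfl

/-- Let `M = (m_{i,j})` be a normal `n`-multimagic square of order `m` and let
`f ∈ ℚ[x]` be a polynomial of degree at most `n` with `f(ℤ) ⊆ ℤ`.  Then the matrix
`M^{∘f} = (f(m_{i,j}))` has integer entries and is a magic square: all row sums, all
column sums, the main diagonal sum and the antidiagonal sum are equal. -/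
theorem magic_of_integer_valued_poly
    (n m : ℕ) (M : Fin m → Fin m → ℕ)
    (hnorm : IsNormal M) (hmagic : IsMultimagic n M)
    (f : Polynomial ℚ) (hdeg : f.natDegree ≤ n)
    (hint : ∀ z : ℤ, ∃ w : ℤ, f.eval (z : ℚ) = (w : ℚ)) :
    (∀ i j, ∃ w : ℤ, f.eval ((M i j : ℚ)) = (w : ℚ)) ∧
    IsMagicSquareRat (fun i j => f.eval ((M i j : ℚ))) := by
  refine ⟨fun i j => by simpa using hint (M i j), ?_⟩
  -- Exponent `0` is not part of multimagicness: every line has `0`-th power sum `m`.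
  have h_all : ∀ d, d ≤ n → IsMagicSquare (fun i j => M i j ^ d) := by
    intro d hd
    rcases Nat.eq_zero_or_pos d with rfl | hpos
    · exact ⟨m, by simp⟩
    · exact hmagic d hpos hd
  choose! S hrow hcol hdiag hanti using h_all
  exact ⟨∑ d ∈ Finset.range (n + 1), f.coeff d * (S d : ℚ),
    fun i => sum_eval_eq_of_sum_pow f hdeg S _ fun d hd => hrow d hd i,
    fun j => sum_eval_eq_of_sum_pow f hdeg S _ fun d hd => hcol d hd j,
    sum_eval_eq_of_sum_pow f hdeg S _ hdiag,
    sum_eval_eq_of_sum_pow f hdeg S _ hanti⟩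
end

section
/- Let M be a normal n-multimagic square of order m, let p be a prime, and suppose v_p(m) = e with e ≥ 1. Then n ≤ p^{e+1} − 2. -/
/-- The special case of Lucas' theorem used below: with all base-`p` digits of the last `k` places
equal to `p - 1` on both sides, every factor `C(p - 1, p - 1)` is `1`. -/
theorem not_dvd_choose_sub_one {p : ℕ} (hp : p.Prime) (t : ℕ) (ht : 0 < t) (k : ℕ) :
    ¬ p ∣ (t * p ^ k - 1).choose (p ^ k - 1) := by
  have := Fact.mk hp
  induction k with
  | zero => simpa using hp.one_lt.ne'
  | succ k ih =>
    have hp0 := hp.pos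
    -- For `0 < a` the last base-`p` digit of `a * p - 1` is `p - 1`, the others are those of `a - 1`.
    have key : ∀ a : ℕ, 0 < a → (a * p - 1) % p = p - 1 ∧ (a * p - 1) / p = a - 1 := by
      intro a ha
      obtain ⟨b, rfl⟩ : ∃ b, a = b + 1 := ⟨a - 1, by omega⟩
      have h : (b + 1) * p - 1 = (p - 1) + p * b := by
        rw [add_mul, one_mul, mul_comm b p]; omega
      rw [h]
      constructor
      · rw [Nat.add_mul_mod_self_left, Nat.mod_eq_of_lt (by omega)]
      · rw [Nat.add_mul_div_left _ _ hp0, Nat.div_eq_of_lt (by omega)]; simp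
    have h := Choose.choose_modEq_choose_mod_mul_choose_div_nat
      (n := t * p ^ k * p - 1) (k := p ^ k * p - 1) (p := p)
    have hk : 0 < p ^ k := pow_pos hp0 k
    rw [(key _ (Nat.mul_pos ht hk)).1, (key _ (Nat.mul_pos ht hk)).2, (key _ hk).1, (key _ hk).2,
      Nat.choose_self, one_mul] at h
    rw [pow_succ, ← mul_assoc, h.dvd_iff dvd_rfl]
    exact ih

theorem sum_Icc_choose_sub_one (N k : ℕ) :
    ∑ x ∈ Finset.Icc 1 N, (x - 1).choose k = N.choose (k + 1) := by
  induction N with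
  | zero => simp
  | succ N ih =>
    rw [Finset.sum_Icc_succ_top (by omega), ih, Nat.add_sub_cancel, Nat.choose_succ_succ, add_comm]

/-- A polynomial of degree at most `n` has the same sum over the entries of any two rows. -/
theorem row_sum_eval_eq {m n : ℕ} {M : Fin m → Fin m → ℕ} (hM : IsMultimagic n M)
    (P : Polynomial ℤ) (hP : P.natDegree ≤ n) (i i' : Fin m) :
    ∑ j, P.eval (M i j : ℤ) = ∑ j, P.eval (M i' j : ℤ) := by
  simp only [Polynomial.eval_eq_sum_range]
  rw [Finset.sum_comm, Finset.sum_comm (s := Finset.univ)]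
  refine Finset.sum_congr rfl fun d hd => ?_
  rw [← Finset.mul_sum, ← Finset.mul_sum]
  congr 1
  rcases Nat.eq_zero_or_pos d with rfl | hd0
  · simp
  · obtain ⟨S, hS, -⟩ := hM d hd0 (by have := Finset.mem_range.1 hd; omega)
    exact_mod_cast (hS i).trans (hS i').symm

theorem sum_entries_eq {m : ℕ} {M : Fin m → Fin m → ℕ} (hM : IsNormal M) (f : ℕ → ℕ) :
    ∑ i, ∑ j, f (M i j) = ∑ x ∈ Finset.Icc 1 (m ^ 2), f x := by
  have himg : Finset.Icc 1 (m ^ 2) =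
      Finset.univ.image (fun p : Fin m × Fin m => M p.1 p.2) := by
    apply Finset.coe_injective
    rw [Finset.coe_image, Finset.coe_univ, Set.image_univ, hM.2, Finset.coe_Icc]
  rw [himg, Finset.sum_image (fun a _ b _ h => hM.1 h), Fintype.sum_prod_type]

/-- The quotient is the common row sum of `C(x - 1, k)`. -/
theorem dvd_choose_of_multimagic {m n k : ℕ} {M : Fin m → Fin m → ℕ} (hnorm : IsNormal M)
    (hM : IsMultimagic n M) (hm : 0 < m) (hk : k ≤ n) : m ∣ (m ^ 2).choose (k + 1) := by
  have hpos : ∀ i j, 1 ≤ M i j := fun i j =>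
    (hnorm.2.subset (Set.mem_range_self (i, j)) : M i j ∈ Set.Icc 1 (m ^ 2)).1
  -- `k! * C(x - 1, k)` as an integer polynomial in `x`.
  let P : Polynomial ℤ := (descPochhammer ℤ k).comp (Polynomial.X - Polynomial.C 1)
  have hdeg : P.natDegree ≤ n := by
    rw [Polynomial.natDegree_comp, Polynomial.natDegree_X_sub_C, descPochhammer_natDegree, mul_one]
    exact hk
  have heval : ∀ i j, P.eval (M i j : ℤ) = ((k.factorial * (M i j - 1).choose k : ℕ) : ℤ) := by
    intro i j
    rw [← Nat.descFactorial_eq_factorial_mul_choose, ← descPochhammer_eval_eq_descFactorial,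
      Polynomial.eval_comp]
    simp [Nat.cast_sub (hpos i j)]
  have hrow : ∀ i, ∑ j, (M i j - 1).choose k = ∑ j, (M ⟨0, hm⟩ j - 1).choose k := by
    intro i
    have h := row_sum_eval_eq hM P hdeg i ⟨0, hm⟩
    simp only [heval] at h
    rw [← Nat.cast_sum, ← Nat.cast_sum, Nat.cast_inj, ← Finset.mul_sum, ← Finset.mul_sum] at h
    exact Nat.eq_of_mul_eq_mul_left k.factorial_pos h
  have htot := sum_entries_eq hnorm (fun x => (x - 1).choose k)
  rw [sum_Icc_choose_sub_one, Finset.sum_congr rfl (fun i _ => hrow i), Finset.sum_const,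
    Finset.card_univ, Fintype.card_fin, smul_eq_mul] at htot
  exact ⟨_, htot.symm⟩

/-- If `M` is a normal `n`-multimagic square of order `m`, `p` is a prime and
`v_p(m) = e ≥ 1`, then `n ≤ p^(e+1) − 2`. -/
theorem multimagic_order_bound
    (n m : ℕ) (M : Fin m → Fin m → ℕ)
    (hnorm : IsNormal M) (hmagic : IsMultimagic n M)
    (p e : ℕ) (hp : p.Prime) (hvm : padicValNat p m = e) (he : 1 ≤ e) :
    n ≤ p ^ (e + 1) - 2 := by
  have := Fact.mk hp
  by_contra hn
  have hm0 : m ≠ 0 := by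
    rintro rfl
    simp at hvm
    omega
  have hm : 0 < m := Nat.pos_of_ne_zero hm0
  have hq : 0 < p ^ (e + 1) := pow_pos hp.pos _
  obtain ⟨c, hc⟩ := dvd_choose_of_multimagic (k := p ^ (e + 1) - 1) hnorm hmagic hm (by omega)
  rw [Nat.sub_add_cancel hq] at hc
  have hdvd : p ^ e ∣ m := hvm ▸ pow_padicValNat_dvd
  obtain ⟨u, hu⟩ := hdvd
  have hpu : ¬ p ∣ u := by
    intro h
    have h1 : p ^ (e + 1) ∣ m := by
      rw [hu, pow_succ]
      exact mul_dvd_mul_left _ h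
    have h2 := (padicValNat_dvd_iff_le hm0).1 h1
    omega
  have hqm : p ^ (e + 1) ∣ m ^ 2 := by
    rw [hu, mul_pow, ← pow_mul]
    exact (pow_dvd_pow p (by omega)).mul_right _
  obtain ⟨t, ht⟩ := hqm
  have hm2 : 0 < m ^ 2 := pow_pos hm 2
  have ht0 : 0 < t := by
    rcases Nat.eq_zero_or_pos t with rfl | h
    · simp at ht; omega
    · exact h
  have hnd := not_dvd_choose_sub_one hp t ht0 (e + 1)
  rw [mul_comm t, ← ht] at hnd
  have habs := Nat.add_one_mul_choose_eq (m ^ 2 - 1) (p ^ (e + 1) - 1)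
  rw [Nat.sub_add_cancel hm2, Nat.sub_add_cancel hq, hc] at habs
  -- Cancelling `m * p ^ e` leaves `u * C(m² - 1, q - 1) = p * c`.
  have hfin : u * (m ^ 2 - 1).choose (p ^ (e + 1) - 1) = p * c := by
    have hpe : 0 < p ^ e := pow_pos hp.pos _
    apply Nat.eq_of_mul_eq_mul_left (Nat.mul_pos hm hpe)
    calc m * p ^ e * (u * (m ^ 2 - 1).choose (p ^ (e + 1) - 1))
        = m * (p ^ e * u) * (m ^ 2 - 1).choose (p ^ (e + 1) - 1) := by ring
      _ = m ^ 2 * (m ^ 2 - 1).choose (p ^ (e + 1) - 1) := by rw [← hu, sq]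
      _ = m * c * p ^ (e + 1) := habs
      _ = m * p ^ e * (p * c) := by ring
  rcases hp.dvd_mul.1 ⟨c, hfin⟩ with h | h
  · exact hpu h
  · exact hnd h
end
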